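/- Suppose D = ρ/κ is a skew diagram that is a sum of fat staircases, so s_D = Σ_ν c^ρ_{κν} s_ν with every ν appearing being a fat staircase. Then for all partitions μ ⊆ λ and all k ≥ 0 (with λ_1 − μ_1 − k at most the length of the last row of D), the difference Σ_ν c^ρ_{κν} s_{S(λ,μ,α(ν);k)} − s_{S(λ,μ,D;k)} is Schur-positive. -/

import Mathlib

/-!
Both sides are compared through the Littlewood–Richardson rule. The difference is a combination of
Schur functions of partitions `d`, and its coefficient at `d` is nonnegative because of an injection
from lattice tableaux of shape `S(λ, μ, D; k)` and content `d` to pairs consisting of a lattice tableau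
of shape `D` and content `ν` and a lattice tableau of shape `S(λ, μ, α(ν); k)` and content `d`.

The rule itself (`lr_rule`) is proved following Stembridge. Bender–Knuth involutions (`bk`) show that
the Schur function of a skew diagram is symmetric (`card_cont_perm`). In its product with the
Vandermonde alternant, the tableaux that are not lattice cancel: apply the involution to the left of
the first violation of the lattice condition (`sum_not_colLattice`). For this the lattice condition is
read by columns, which is equivalent to reading it by rows (`IsSkew.isLattice_iff`). What remains at
strictly decreasing exponents counts lattice tableaux (`sum_altDelta`), and a symmetric function is
determined by these coefficients (`eq_zero_of_altDelta`).

For the injection, cut a lattice tableau on `S(λ, μ, D; k)` along the interface. The upper part is a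
lattice tableau on `D` of some content `ν`, and the lower part continues its reading word
(`isLattice_below`, `lrCount_below_le`). By hypothesis `ν` is a fat staircase, so its consecutive parts
differ by at most one. Hence, where the lower part lies below cells of `D`, its first row cannot repeat
an entry, and the entries are so large (`LatticeFrom.interface`) that the lower part fits below the
filling of the rotated fat staircase whose columns are `0, 1, 2, …` (`card_lower_le`). That filling is
lattice with the same content `ν`, so the glued tableau is lattice with the same content `d`.

The rule applies since all the diagrams are skew. The bound on the overlap passes from `D` to the
rotated fat staircases because a lattice tableau has at least as many zeros as there are cells in the
last row (`IsSkew.lastRowLen_le`). If the first row of `λ/μ` is empty, the diagrams need not be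
skew, but then the two parts do not interact and can be shifted against each other
(`exists_shift`).
-/

open Finset

/-- A diagram is a finite set of cells `(row, column)`. -/
abbrev Diagram := Finset (ℕ × ℕ)

def ht (D : Diagram) : ℕ := D.sup (fun c => c.1 + 1)
def wd (D : Diagram) : ℕ := D.sup (fun c => c.2 + 1)

/-- A semistandard Young tableau of shape `D` (entries are 0-based: the paper's
value `v` corresponds to the entry `v - 1`). -/
structure SSYT (D : Diagram) where
  entry : ℕ × ℕ → ℕ
  rowWeak : ∀ i j, (i, j) ∈ D → (i, j + 1) ∈ D → entry (i, j) ≤ entry (i, j + 1)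
  colStrict : ∀ i j, (i, j) ∈ D → (i + 1, j) ∈ D → entry (i, j) < entry (i + 1, j)
  zero_outside : ∀ c, c ∉ D → entry c = 0

/-- The content of a tableau: `content T v` is the number of cells with entry `v`. -/
noncomputable def content {D : Diagram} (T : SSYT D) : ℕ →₀ ℕ := ∑ c ∈ D, Finsupp.single (T.entry c) 1

/-- `c'` is read before (or equal to) `c` in the reading word:
rows top to bottom, each row right to left. -/
def ReadBefore (c' c : ℕ × ℕ) : Prop := c'.1 < c.1 ∨ (c'.1 = c.1 ∧ c.2 ≤ c'.2)

instance (c' c : ℕ × ℕ) : Decidable (ReadBefore c' c) := by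
  unfold ReadBefore; infer_instance

/-- The reading word of `T` is lattice. -/
def IsLattice {D : Diagram} (T : SSYT D) : Prop :=
  ∀ c ∈ D, ∀ v : ℕ,
    (D.filter (fun c' => ReadBefore c' c ∧ T.entry c' = v + 1)).card ≤
    (D.filter (fun c' => ReadBefore c' c ∧ T.entry c' = v)).card

/-- The skew Schur function of a diagram, as a power series in `x_0, x_1, …`:
the coefficient of the monomial with exponents `d` is the number of SSYT of
shape `D` and content `d`. -/
noncomputable def schurOf (D : Diagram) : MvPowerSeries ℕ ℤ :=
  fun d => (Nat.card {T : SSYT D // content T = d} : ℤ)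

/-- Number of lattice SSYT of shape `D` and content `d`. -/
noncomputable def lrCount (D : Diagram) (d : ℕ →₀ ℕ) : ℕ :=
  Nat.card {T : SSYT D // IsLattice T ∧ content T = d}

/-- Littlewood–Richardson coefficient `c^lam_{mu, d}` (Littlewood–Richardson rule). -/
noncomputable def lrCoeff (lam mu : YoungDiagram) (d : ℕ →₀ ℕ) : ℕ :=
  lrCount (lam.cells \ mu.cells) d

def diagramOfRows (L : List ℕ) : Diagram :=
  (Finset.range L.length).biUnion (fun i => (Finset.range (L.getD i 0)).image (fun j => (i, j)))

/-- The row lengths of the fat staircase `δ_α`. -/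
def staircaseRows (α : List ℕ) : List ℕ :=
  ((List.range α.length).reverse.map (fun i => List.replicate (α.getD i 0) (i + 1))).flatten

/-- The fat staircase `δ_α = (n^{α_n}, …, 1^{α_1})` for `α = (α_1, …, α_n)`. -/
def fatStaircase (α : List ℕ) : Diagram := diagramOfRows (staircaseRows α)

/-- 180 degree rotation of a diagram. -/
def rotD (D : Diagram) : Diagram :=
  D.image (fun c => (ht D - 1 - c.1, wd D - 1 - c.2))

/-- The sequence of row lengths of a diagram, as a finitely supported function. -/
noncomputable def rowContent (D : Diagram) : ℕ →₀ ℕ := ∑ c ∈ D, Finsupp.single c.1 1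

/-- A content (partition) `d` is a fat staircase. -/
def IsFatStaircase (d : ℕ →₀ ℕ) : Prop :=
  ∃ α : List ℕ, (∀ a ∈ α, 0 < a) ∧ d = rowContent (fatStaircase α)

/-- Every Schur function appearing in the expansion of `s_D` is indexed by a fat staircase. -/
def IsSumOfFatStaircases (D : Diagram) : Prop :=
  ∀ d, lrCount D d ≠ 0 → IsFatStaircase d

/-- Near-concatenation of depth `i`. -/
def nearConcat (i : ℕ) (D1 D2 : Diagram) : Diagram :=
  D1.image (fun c => (c.1 + (ht D2 - i), c.2)) ∪ D2.image (fun c => (c.1, c.2 + wd D1))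

/-- Direct sum of diagrams. -/
def directSum (D1 D2 : Diagram) : Diagram := nearConcat 0 D1 D2

/-- A single column of `l` boxes. -/
def colD (l : ℕ) : Diagram := (Finset.range l).image (fun i => (i, 0))

/-- A single row of `m` boxes. -/
def rowD (m : ℕ) : Diagram := (Finset.range m).image (fun j => (0, j))

def colLenAt (D : Diagram) (j : ℕ) : ℕ := (D.filter (fun c => c.2 = j)).card
noncomputable def leftCol (D : Diagram) : ℕ := sInf {j | ∃ i, (i, j) ∈ D}
noncomputable def blCol (D : Diagram) : ℕ := sInf {j | (ht D - 1, j) ∈ D}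
noncomputable def topRow (D : Diagram) : ℕ := sInf {i | ∃ j, (i, j) ∈ D}
noncomputable def tlCol (D : Diagram) : ℕ := sInf {j | (topRow D, j) ∈ D}
def lastRowLen (D : Diagram) : ℕ := (D.filter (fun c => c.1 = ht D - 1)).card

/-- `S(F, E; k)`: the foundation `F` is placed immediately below `E`, with the
first row of `F` beginning one box below and `k` boxes left of the bottom-left
box of `E`. -/
noncomputable def SDiagG (F E : Diagram) (k : ℕ) : Diagram :=
  E.image (fun c => (c.1, c.2 + tlCol F + k)) ∪
  F.image (fun c => (c.1 + ht E, c.2 + blCol E))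

/-- `S(λ, μ, E; k)` with foundation the skew diagram `λ/μ`. -/
noncomputable def SDiag (lam mu : YoungDiagram) (E : Diagram) (k : ℕ) : Diagram :=
  SDiagG (lam.cells \ mu.cells) E k

/-- The set `R_{α,k}` (values as in the paper, i.e. 1-based). -/
def Rset (α : List ℕ) (k : ℕ) : Set ℕ :=
  {v | ∃ j, 1 ≤ j ∧ j ≤ α.length ∧ v = 1 + (α.drop (α.length - j)).sum} ∪
  {v | v = 1 ∧ 0 < k}

def rectD (a b : ℕ) : Diagram := Finset.range a ×ˢ Finset.range b

/-- The complement `D^c` of `D` in the `a × b` rectangle: the 180 degree rotation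
of the set-theoretic complement of `D` in the rectangle. -/
def complD (a b : ℕ) (D : Diagram) : Diagram :=
  (rectD a b \ D).image (fun c => (a - 1 - c.1, b - 1 - c.2))

def IsSkewDiagram (D : Diagram) : Prop :=
  ∃ lam mu : YoungDiagram, mu ≤ lam ∧ D = lam.cells \ mu.cells

def diagramOfF (d : ℕ →₀ ℕ) : Diagram :=
  d.support.biUnion (fun i => (Finset.range (d i)).image (fun j => (i, j)))

/-- A symmetric function is Schur-positive when it is a nonnegative integer
combination of Schur functions of partitions. -/
def SchurPositive (f : MvPowerSeries ℕ ℤ) : Prop :=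
  ∃ (S : Finset (ℕ →₀ ℕ)) (a : (ℕ →₀ ℕ) → ℕ),
    (∀ d ∈ S, ∀ i, d (i + 1) ≤ d i) ∧
    f = ∑ d ∈ S, (a d : ℤ) • schurOf (diagramOfF d)

def AdjCell (c c' : ℕ × ℕ) : Prop :=
  (c.1 = c'.1 ∧ (c.2 + 1 = c'.2 ∨ c'.2 + 1 = c.2)) ∨
  (c.2 = c'.2 ∧ (c.1 + 1 = c'.1 ∨ c'.1 + 1 = c.1))

def ConnectedDiagram (D : Diagram) : Prop :=
  ∀ c ∈ D, ∀ c' ∈ D, Relation.ReflTransGen (fun a b => a ∈ D ∧ b ∈ D ∧ AdjCell a b) c c'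

/-! ### Skew diagrams and the two reading orders -/

/-- `A` is the skew diagram whose `i`-th row occupies the columns `a i, …, b i - 1`. -/
structure IsSkew (A : Diagram) (a b : ℕ → ℕ) : Prop where
  anti_a : Antitone a
  anti_b : Antitone b
  le : ∀ i, a i ≤ b i
  mem : ∀ i j, (i, j) ∈ A ↔ a i ≤ j ∧ j < b i

theorem SSYT.ext' {A : Diagram} {T T' : SSYT A} (h : ∀ c ∈ A, T.entry c = T'.entry c) :
    T = T' := by
  have : T.entry = T'.entry := by
    funext c
    by_cases hc : c ∈ A
    · exact h c hc
    · rw [T.zero_outside c hc, T'.zero_outside c hc]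
  cases T; cases T'; simp_all

theorem content_apply {A : Diagram} (T : SSYT A) (v : ℕ) :
    content T v = #{c ∈ A | T.entry c = v} := by
  unfold content
  rw [Finsupp.finsetSum_apply, Finset.card_filter]
  refine Finset.sum_congr rfl fun c _ => ?_
  rw [Finsupp.single_apply]

section Skew
variable {A : Diagram} {a b : ℕ → ℕ}

theorem IsSkew.row_le (hs : IsSkew A a b) (T : SSYT A) {i j j' : ℕ} (h : (i, j) ∈ A)
    (h' : (i, j') ∈ A) (hj : j ≤ j') : T.entry (i, j) ≤ T.entry (i, j') := by
  induction j', hj using Nat.le_induction with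
  | base => exact le_rfl
  | succ m hm ih =>
    have hm' : (i, m) ∈ A := by
      rw [hs.mem] at *; omega
    exact (ih hm').trans (T.rowWeak i m hm' h')

theorem IsSkew.col_mem (hs : IsSkew A a b) {i i' k j : ℕ} (h : (i, j) ∈ A)
    (h' : (i', j) ∈ A) (hi : i ≤ k) (hk : k ≤ i') : (k, j) ∈ A := by
  rw [hs.mem] at *
  have := hs.anti_a hi
  have := hs.anti_b hk
  omega

theorem IsSkew.col_lt (hs : IsSkew A a b) (T : SSYT A) {i i' j : ℕ} (h : (i, j) ∈ A)
    (h' : (i', j) ∈ A) (hi : i < i') : T.entry (i, j) < T.entry (i', j) := by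
  induction i', hi using Nat.le_induction with
  | base => exact T.colStrict i j h h'
  | succ m hm ih =>
    have hm' : (m, j) ∈ A := hs.col_mem h h' (by omega) (by omega)
    exact (ih hm').trans (T.colStrict m j hm' h')

/-- The south-west corner of the rectangle spanned by two cells of a skew diagram. -/
theorem IsSkew.sw_mem (hs : IsSkew A a b) {i i' j j' : ℕ} (h : (i, j) ∈ A)
    (h' : (i', j') ∈ A) (hi : i ≤ i') (hj : j ≤ j') : (i', j) ∈ A := by
  rw [hs.mem] at *
  have := hs.anti_a hi
  omega

theorem IsSkew.diag_lt (hs : IsSkew A a b) (T : SSYT A) {i i' j j' : ℕ} (h : (i, j) ∈ A)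
    (h' : (i', j') ∈ A) (hi : i < i') (hj : j ≤ j') : T.entry (i, j) < T.entry (i', j') := by
  have hm := hs.sw_mem h h' hi.le hj
  exact (hs.col_lt T h hm hi).trans_le (hs.row_le T hm h' hj)

/-- The number of entries `v` in the columns from `J` on. -/
def cnt (T : SSYT A) (J v : ℕ) : ℕ := #{c ∈ A | J ≤ c.2 ∧ T.entry c = v}

/-- The lattice condition for the reading word by columns, from right to left: the content of
the columns from `J` on is a partition, for every `J`. -/
def ColLattice (T : SSYT A) : Prop := ∀ J v, cnt T J (v + 1) ≤ cnt T J v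

theorem cnt_anti (T : SSYT A) {J J' : ℕ} (h : J ≤ J') (v : ℕ) : cnt T J' v ≤ cnt T J v := by
  refine card_le_card fun c => ?_
  simp only [mem_filter]
  rintro ⟨h1, h2, h3⟩
  exact ⟨h1, by omega, h3⟩

theorem cnt_zero (T : SSYT A) (v : ℕ) : cnt T 0 v = content T v := by
  rw [content_apply]; simp [cnt]

/-- As `v` occurs at most once in each column, omitting `m` columns omits at most `m` copies. -/
theorem IsSkew.card_cols_le (hs : IsSkew A a b) (T : SSYT A) (J m v : ℕ) :
    cnt T J v ≤ cnt T (J + m) v + m := by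
  induction m with
  | zero => simp
  | succ m ih =>
    refine ih.trans ?_
    have : cnt T (J + m) v ≤ cnt T (J + (m + 1)) v + 1 := by
      unfold cnt
      have hsub : {c ∈ A | J + m ≤ c.2 ∧ T.entry c = v} ⊆
          {c ∈ A | J + (m + 1) ≤ c.2 ∧ T.entry c = v} ∪
          {c ∈ A | c.2 = J + m ∧ T.entry c = v} := by
        intro c
        simp only [mem_union, mem_filter]
        rintro ⟨h1, h2, h3⟩
        rcases Nat.lt_or_ge c.2 (J + (m + 1)) with h | h
        · exact Or.inr ⟨h1, by omega, h3⟩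
        · exact Or.inl ⟨h1, h, h3⟩
      refine (card_le_card hsub).trans ((card_union_le _ _).trans ?_)
      gcongr
      refine card_le_one.2 ?_
      rintro ⟨i, j⟩ h ⟨i', j'⟩ h'
      simp only [mem_filter] at h h'
      obtain ⟨h1, h2, h3⟩ := h
      obtain ⟨h1', h2', h3'⟩ := h'
      subst h2; subst h2'
      rcases lt_trichotomy i i' with hlt | rfl | hlt
      · have := hs.col_lt T h1 h1' hlt; omega
      · rfl
      · have := hs.col_lt T h1' h1 hlt; omega
    omega

/-- The prefix of the row reading word ending at the leftmost `v + 1` of a suitable row is compared with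
the columns weakly to the right of that cell. -/
theorem IsSkew.colLattice_of_isLattice (hs : IsSkew A a b) {T : SSYT A} (hT : IsLattice T) :
    ColLattice T := by
  classical
  intro J v
  by_cases hne : ∃ j, J ≤ j ∧ ∃ i, (i, j) ∈ A ∧ T.entry (i, j) = v + 1
  swap
  · have : cnt T J (v + 1) = 0 := by
      unfold cnt
      rw [card_eq_zero, filter_eq_empty_iff]
      rintro ⟨i, j⟩ h ⟨h1, h2⟩
      exact hne ⟨j, h1, i, h, h2⟩
    omega
  -- `j` is the leftmost column, weakly to the right of `J`, that contains `v + 1`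
  obtain ⟨hJj, i, hij, hv⟩ := Nat.find_spec hne
  have hmin := fun m => Nat.find_min hne (m := m)
  set j := Nat.find hne with hj
  have e1 : cnt T J (v + 1) ≤ cnt T j (v + 1) := by
    refine card_le_card ?_
    rintro ⟨i', j'⟩
    simp only [mem_filter]
    rintro ⟨h1, h2, h3⟩
    refine ⟨h1, ?_, h3⟩
    by_contra hlt
    exact hmin j' (by omega) ⟨h2, i', h1, h3⟩
  have e2 := cnt_anti T hJj v
  -- `j₀` is the leftmost column in which the row `i` contains `v + 1`
  have hne' : ∃ j₀, (i, j₀) ∈ A ∧ T.entry (i, j₀) = v + 1 := ⟨j, hij, hv⟩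
  obtain ⟨hij₀, hv₀⟩ := Nat.find_spec hne'
  have hmin' := fun m => Nat.find_min hne' (m := m)
  have hj₀ : Nat.find hne' ≤ j := Nat.find_min' hne' ⟨hij, hv⟩
  set j₀ := Nat.find hne' with hj₀'
  have key : cnt T j₀ (v + 1) ≤ cnt T j₀ v := by
    refine le_trans (card_le_card ?_) ((hT (i, j₀) hij₀ v).trans (card_le_card ?_))
    · rintro ⟨i', j'⟩
      simp only [mem_filter]; simp only [ReadBefore]
      rintro ⟨h1, h2, h3⟩
      refine ⟨h1, ?_, h3⟩
      rcases lt_trichotomy i' i with hlt | rfl | hlt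
      · exact Or.inl hlt
      · exact Or.inr ⟨rfl, h2⟩
      · have := hs.diag_lt T hij₀ h1 hlt h2; omega
    · rintro ⟨i', j'⟩
      simp only [mem_filter]; simp only [ReadBefore]
      rintro ⟨h1, h2, h3⟩
      refine ⟨h1, ?_, h3⟩
      rcases h2 with h2 | h2
      · by_contra hlt
        push Not at hlt
        have hm := hs.sw_mem h1 hij₀ h2.le hlt.le
        have g1 := hs.col_lt T h1 hm h2
        have g2 := hs.row_le T hm hij₀ hlt.le
        exact hmin' j' hlt ⟨hm, by omega⟩
      · exact h2.2
  have e3 : cnt T j (v + 1) + (j - j₀) ≤ cnt T j₀ (v + 1) := by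
    have : j - j₀ = #((Ico j₀ j).image fun x => (i, x)) := by
      rw [card_image_of_injective _ (Prod.mk_right_injective i), Nat.card_Ico]
    rw [this]
    unfold cnt
    rw [← card_union_of_disjoint]
    · refine card_le_card ?_
      intro c hc
      simp only [mem_union, mem_filter, mem_image, mem_Ico] at hc ⊢
      rcases hc with ⟨h1, h2, h3⟩ | ⟨x, ⟨h1, h2⟩, rfl⟩
      · exact ⟨h1, by omega, h3⟩
      · have hx : (i, x) ∈ A := by rw [hs.mem] at *; omega
        have g1 := hs.row_le T hij₀ hx h1
        have g2 := hs.row_le T hx hij h2.le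
        exact ⟨hx, h1, by omega⟩
    · rw [disjoint_left]
      intro c hc hc'
      simp only [mem_filter, mem_image, mem_Ico] at hc hc'
      obtain ⟨x, ⟨h1, h2⟩, rfl⟩ := hc'
      simp only at hc
      omega
  have e4 := hs.card_cols_le T j₀ (j - j₀) v
  rw [Nat.add_sub_cancel' hj₀] at e4
  omega

theorem IsSkew.isLattice_of_colLattice (hs : IsSkew A a b) {T : SSYT A} (hT : ColLattice T) :
    IsLattice T := by
  classical
  rintro c₁ - v
  -- only the last entry `v + 1` that has been read matters
  by_cases hne : ({c' ∈ A | ReadBefore c' c₁ ∧ T.entry c' = v + 1} : Finset _).Nonempty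
  swap
  · rw [not_nonempty_iff_eq_empty.1 hne]; simp
  obtain ⟨i, hi, himax⟩ := exists_max_image _ Prod.fst hne
  have hne2 : ({c' ∈ A | (ReadBefore c' c₁ ∧ T.entry c' = v + 1) ∧ c'.1 = i.1} :
      Finset _).Nonempty := ⟨i, by simp only [mem_filter] at hi ⊢; tauto⟩
  obtain ⟨c, hc, hcmin⟩ := exists_min_image _ Prod.snd hne2
  obtain ⟨ci, cj⟩ := c
  simp only [mem_filter] at hc hcmin himax
  obtain ⟨hcA, ⟨hcr, hcv⟩, hci⟩ := hc
  have hback : ∀ c', c' ∈ A → ReadBefore c' c₁ → T.entry c' = v + 1 → ReadBefore c' (ci, cj) := by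
    intro c' h1 h2 h3
    have g1 := himax c' ⟨h1, h2, h3⟩
    rcases Nat.lt_or_ge c'.1 i.1 with h | h
    · exact Or.inl (by simpa [hci] using h)
    · have g2 := hcmin c' ⟨h1, ⟨h2, h3⟩, by omega⟩
      exact Or.inr ⟨by simp only; omega, g2⟩
  refine le_trans (card_le_card ?_) ((hT cj v).trans (card_le_card ?_))
  · rintro ⟨i', j'⟩
    simp only [mem_filter]
    rintro ⟨h1, h2, h3⟩
    refine ⟨h1, ?_, h3⟩
    rcases hback _ h1 h2 h3 with h | h
    · by_contra hlt
      have := hs.diag_lt T h1 hcA h (by omega); omega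
    · exact h.2
  · rintro ⟨i', j'⟩
    simp only [mem_filter]
    rintro ⟨h1, h2, h3⟩
    refine ⟨h1, ?_, h3⟩
    have : i' < ci := by
      by_contra hlt
      rcases Nat.lt_or_ge ci i' with h | h
      · have := hs.diag_lt T hcA h1 h h2; omega
      · obtain rfl : ci = i' := by omega
        have := hs.row_le T hcA h1 h2; omega
    rcases hcr with h | h
    · exact Or.inl (by simp only at h ⊢; omega)
    · exact Or.inl (by simp only at h ⊢; omega)

/-- For a semistandard tableau of skew shape, the row reading word is lattice if and only if the
column reading word is. -/
theorem IsSkew.isLattice_iff (hs : IsSkew A a b) (T : SSYT A) : IsLattice T ↔ ColLattice T :=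
  ⟨hs.colLattice_of_isLattice, hs.isLattice_of_colLattice⟩

end Skew

/-! ### Bender–Knuth involutions -/

section Toggle

/-- The interlacing conditions `Interlace p m q` confine `m i` to the interval
`[max (p i) (q (i + 1)), min (q i) (p (i - 1))]`, or `[max (p 0) (q 1), q 0]` for `i = 0`; the
toggle reflects `m i` in this interval. -/
def toggle (p m q : ℕ → ℕ) (i : ℕ) : ℕ :=
  max (p i) (q (i + 1)) + (if i = 0 then q 0 else min (q i) (p (i - 1))) - m i

/-- The conditions satisfied by the columns `p i ≤ m i ≤ q i` in which the entries `≥ v`, `≥ v + 1`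
and `≥ v + 2` of row `i` of a semistandard tableau begin. The last two conditions express that the
columns increase strictly. -/
structure Interlace (p m q : ℕ → ℕ) : Prop where
  pm : ∀ i, p i ≤ m i
  mq : ∀ i, m i ≤ q i
  mp : ∀ i, m (i + 1) ≤ p i
  qm : ∀ i, q (i + 1) ≤ m i

variable {p m q : ℕ → ℕ}

theorem Interlace.toggle (h : Interlace p m q) : Interlace p (toggle p m q) q := by
  constructor
  · intro i
    have h1 := h.pm i; have h2 := h.mq i; have h4 := h.qm i
    unfold _root_.toggle
    cases i with
    | zero => simp only [if_true]; omega
    | succ i => have := h.mp i; simp only [Nat.succ_ne_zero, if_false, Nat.add_sub_cancel]; omega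
  · intro i
    have h1 := h.pm i; have h2 := h.mq i; have h4 := h.qm i
    unfold _root_.toggle
    cases i with
    | zero => simp only [if_true]; omega
    | succ i => have := h.mp i; simp only [Nat.succ_ne_zero, if_false, Nat.add_sub_cancel]; omega
  · intro i
    have h1 := h.pm (i+1); have h2 := h.mq (i+1); have h4 := h.qm (i+1); have := h.mp i
    unfold _root_.toggle
    simp only [Nat.succ_ne_zero, if_false, Nat.add_sub_cancel]; omega
  · intro i
    have h1 := h.pm i; have h2 := h.mq i; have h4 := h.qm i
    unfold _root_.toggle
    cases i with
    | zero => simp only [if_true]; omega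
    | succ i => have := h.mp i; simp only [Nat.succ_ne_zero, if_false, Nat.add_sub_cancel]; omega

theorem Interlace.toggle_toggle (h : Interlace p m q) :
    _root_.toggle p (_root_.toggle p m q) q = m := by
  funext i
  have h1 := h.pm i; have h2 := h.mq i; have h4 := h.qm i
  unfold _root_.toggle
  cases i with
  | zero => simp only [if_true]; omega
  | succ i => have := h.mp i; simp only [Nat.succ_ne_zero, if_false, Nat.add_sub_cancel]; omega

/-- The sum of `m i` and its toggle is the sum of the two ends of the interval, and these sums
telescope up to a boundary term, since `max x y + min x y = x + y`. -/
theorem Interlace.sum_toggle_aux (h : Interlace p m q) (n : ℕ) :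
    ∑ i ∈ range (n + 1), _root_.toggle p m q i + ∑ i ∈ range (n + 1), m i + min (p n) (q (n + 1))
      = ∑ i ∈ range (n + 1), p i + ∑ i ∈ range (n + 1), q i + q (n + 1) := by
  induction n with
  | zero =>
    have h1 := h.pm 0; have h2 := h.mq 0; have h4 := h.qm 0
    simp only [zero_add, sum_range_one, _root_.toggle, if_true]
    simp only [zero_add] at h4
    omega
  | succ n ih =>
    rw [sum_range_succ _ (n + 1), sum_range_succ m (n + 1), sum_range_succ p (n + 1),
      sum_range_succ q (n + 1)]
    have h1 := h.pm (n+1); have h2 := h.mq (n+1); have h4 := h.qm (n+1); have := h.mp n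
    have e : _root_.toggle p m q (n + 1) = max (p (n+1)) (q (n + 1 + 1)) + min (q (n+1)) (p n)
        - m (n+1) := by simp [_root_.toggle]
    rw [e]
    omega

/-- Toggling exchanges the total distance from `p` to `m` with the total distance from `m` to `q`,
that is, the numbers of entries `v` and `v + 1`. -/
theorem Interlace.sum_toggle (h : Interlace p m q) (n : ℕ) (hn : q n ≤ p n) :
    ∑ i ∈ range n, _root_.toggle p m q i + ∑ i ∈ range n, m i
      = ∑ i ∈ range n, p i + ∑ i ∈ range n, q i := by
  cases n with
  | zero => simp
  | succ n =>
    have := h.sum_toggle_aux n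
    have h1 := h.pm (n+1); have := h.mp n
    omega
end Toggle

section BK
variable {A : Diagram} {a b : ℕ → ℕ}

theorem cut_exists (a b : ℕ → ℕ) (T : SSYT A) (J v i : ℕ) :
    ∃ x, min (a i) J ≤ x ∧ ∀ j, x ≤ j → j < min (b i) J → v ≤ T.entry (i, j) :=
  ⟨max (min (a i) J) (min (b i) J), le_max_left _ _, fun j h1 h2 => by omega⟩

/-- The column in which the entries `≥ v` of row `i` begin, the tableau being truncated to the
columns to the left of `J`. -/
noncomputable def cut (a b : ℕ → ℕ) (T : SSYT A) (J v i : ℕ) : ℕ := by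
  classical exact Nat.find (cut_exists a b T J v i)

theorem le_cut (T : SSYT A) (J v i : ℕ) : min (a i) J ≤ cut a b T J v i := by
  classical exact (Nat.find_spec (cut_exists a b T J v i)).1

theorem IsSkew.cut_le (hs : IsSkew A a b) (T : SSYT A) (J v i : ℕ) :
    cut a b T J v i ≤ min (b i) J := by
  classical
  have := hs.le i
  exact Nat.find_min' (cut_exists a b T J v i) ⟨by omega, fun j h1 h2 => by omega⟩

theorem IsSkew.lt_cut_iff (hs : IsSkew A a b) (T : SSYT A) {J i j : ℕ} (v : ℕ)
    (h : (i, j) ∈ A) (hj : j < J) : j < cut a b T J v i ↔ T.entry (i, j) < v := by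
  classical
  have hm := (hs.mem i j).1 h
  constructor
  · intro hlt
    have := Nat.find_min (cut_exists a b T J v i) hlt
    push Not at this
    obtain ⟨j', h1, h2, h3⟩ := this (by omega)
    exact (hs.row_le T h ((hs.mem i j').2 (by omega)) h1).trans_lt h3
  · intro hlt
    by_contra hge
    have := (Nat.find_spec (cut_exists a b T J v i)).2 j (by simpa [cut] using hge) (by omega)
    omega

theorem IsSkew.cut_unique (hs : IsSkew A a b) (T : SSYT A) {J i v x : ℕ}
    (h1 : min (a i) J ≤ x) (h2 : x ≤ min (b i) J)
    (h : ∀ j, (i, j) ∈ A → j < J → (j < x ↔ T.entry (i, j) < v)) : cut a b T J v i = x := by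
  have g1 := le_cut (a := a) (b := b) T J v i
  have g2 := hs.cut_le T J v i
  by_contra hne
  rcases Nat.lt_or_gt_of_ne hne with hlt | hlt
  · have hj : cut a b T J v i < J := by omega
    have hm : (i, cut a b T J v i) ∈ A := (hs.mem _ _).2 (by omega)
    have := hs.lt_cut_iff T v hm hj
    have := h _ hm hj
    omega
  · have hj : x < J := by omega
    have hm : (i, x) ∈ A := (hs.mem _ _).2 (by omega)
    have := hs.lt_cut_iff T v hm hj
    have := h _ hm hj
    omega

theorem IsSkew.cut_mono (hs : IsSkew A a b) (T : SSYT A) {J v v' : ℕ} (hv : v ≤ v') (i : ℕ) :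
    cut a b T J v i ≤ cut a b T J v' i := by
  have g1 := le_cut (a := a) (b := b) T J v' i
  have g2 := hs.cut_le T J v i
  by_contra hlt
  have hj : cut a b T J v' i < J := by omega
  have hm : (i, cut a b T J v' i) ∈ A := (hs.mem _ _).2 (by omega)
  have := hs.lt_cut_iff T v hm hj
  have := hs.lt_cut_iff T v' hm hj
  omega

theorem IsSkew.cut_succ (hs : IsSkew A a b) (T : SSYT A) (J v i : ℕ) :
    cut a b T J (v + 1) (i + 1) ≤ cut a b T J v i := by
  have g1 := le_cut (a := a) (b := b) T J v i
  have g2 := hs.cut_le T J (v + 1) (i + 1)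
  by_contra hlt
  have ha := hs.anti_a (Nat.le_succ i)
  have hb := hs.anti_b (Nat.le_succ i)
  have hj : cut a b T J v i < J := by omega
  have hm : (i, cut a b T J v i) ∈ A := (hs.mem _ _).2 (by simp only [Nat.succ_eq_add_one] at *; omega)
  have hm' : (i + 1, cut a b T J v i) ∈ A := (hs.mem _ _).2 (by simp only [Nat.succ_eq_add_one] at *; omega)
  have := hs.lt_cut_iff T v hm hj
  have := hs.lt_cut_iff T (v + 1) hm' hj
  have := T.colStrict _ _ hm hm'
  omega

theorem IsSkew.interlace (hs : IsSkew A a b) (T : SSYT A) (J v : ℕ) :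
    Interlace (cut a b T J v) (cut a b T J (v + 1)) (cut a b T J (v + 2)) where
  pm i := hs.cut_mono T (Nat.le_succ v) i
  mq i := hs.cut_mono T (Nat.le_succ (v + 1)) i
  mp i := hs.cut_succ T J v i
  qm i := hs.cut_succ T J (v + 1) i

/-- The entries `v` of row `i` to the left of the column `J` fill the columns from `cut v i` up to
`cut (v + 1) i`. -/
theorem IsSkew.card_cut (hs : IsSkew A a b) (T : SSYT A) (J v n : ℕ)
    (hn : ∀ c ∈ A, c.1 < n) :
    #{c ∈ A | c.2 < J ∧ T.entry c = v} + ∑ i ∈ range n, cut a b T J v i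
      = ∑ i ∈ range n, cut a b T J (v + 1) i := by
  classical
  rw [card_eq_sum_card_fiberwise (f := Prod.fst) (t := range n), ← sum_add_distrib]
  · refine sum_congr rfl fun i _ => ?_
    have hmono := hs.cut_mono T (J := J) (Nat.le_succ v) i
    have : ({c ∈ {c ∈ A | c.2 < J ∧ T.entry c = v} | c.1 = i} : Finset (ℕ × ℕ)) =
        (Ico (cut a b T J v i) (cut a b T J (v + 1) i)).image (fun j => (i, j)) := by
      ext ⟨i', j⟩
      simp only [mem_filter, mem_image, mem_Ico, Prod.mk.injEq]
      constructor
      · rintro ⟨⟨h1, h2, h3⟩, rfl⟩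
        have := hs.lt_cut_iff T v h1 h2
        have := hs.lt_cut_iff T (v + 1) h1 h2
        exact ⟨j, by omega, rfl, rfl⟩
      · rintro ⟨j, ⟨h1, h2⟩, rfl, rfl⟩
        have g1 := le_cut (a := a) (b := b) T J v i
        have g2 := hs.cut_le T J (v + 1) i
        have hj : j < J := by omega
        have hm : (i, j) ∈ A := (hs.mem _ _).2 (by omega)
        have := hs.lt_cut_iff T v hm hj
        have := hs.lt_cut_iff T (v + 1) hm hj
        exact ⟨⟨hm, hj, by omega⟩, rfl⟩
    rw [this, card_image_of_injective _ (Prod.mk_right_injective i), Nat.card_Ico]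
    simp only [Nat.succ_eq_add_one] at *
    omega
  · intro c hc
    simp only [coe_filter, Set.mem_ofPred_eq] at hc
    simpa using hn c hc.1

open Classical in
/-- The Bender–Knuth involution applied to the columns to the left of `J`: it only changes entries
`v` and `v + 1`, toggling in each row the boundary between them. The other entries confine that
boundary as in `Interlace`. If the column `J` contains no `v`, the rows still increase weakly when
passing to the column `J`, as an entry `v` to the left of `J` may turn into `v + 1`. -/
noncomputable def bk (hs : IsSkew A a b) (T : SSYT A) (J v : ℕ)
    (hJ : ∀ i, (i, J) ∈ A → T.entry (i, J) ≠ v) : SSYT A where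
  entry c := if c ∈ A ∧ c.2 < J ∧ (T.entry c = v ∨ T.entry c = v + 1) then
      (if c.2 < toggle (cut a b T J v) (cut a b T J (v + 1)) (cut a b T J (v + 2)) c.1
        then v else v + 1)
    else T.entry c
  rowWeak i j h h' := by
    have hle := T.rowWeak i j h h'
    have hJ' := hJ i
    by_cases hj : j + 1 = J
    · subst hj
      have := hJ' h'
      simp only [h, h', true_and, lt_self_iff_false, false_and, if_false]
      split_ifs <;> omega
    · simp only [h, h', true_and]
      split_ifs <;> omega
  colStrict i j h h' := by
    have hlt := T.colStrict i j h h'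
    have ht := (hs.interlace T J v).toggle
    have h1 := ht.mp i
    have h2 := ht.qm i
    by_cases hj : j < J
    · have := hs.lt_cut_iff T v h hj
      have := hs.lt_cut_iff T (v + 2) h' hj
      simp only [h, h', hj, true_and]
      split_ifs <;> omega
    · simp only [hj, false_and, and_false, if_false]
      exact hlt
  zero_outside c hc := by
    simp only [hc, false_and, if_false]
    exact T.zero_outside c hc

variable (hs : IsSkew A a b) (T : SSYT A) {J v : ℕ}
    (hJ : ∀ i, (i, J) ∈ A → T.entry (i, J) ≠ v)

include hs hJ in
theorem bk_entry_of_ge {c : ℕ × ℕ} (hc : J ≤ c.2) : (bk hs T J v hJ).entry c = T.entry c := by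
  have : ¬ c.2 < J := by omega
  simp [bk, this]

theorem bk_entry_of_ne {c : ℕ × ℕ} (h1 : T.entry c ≠ v) (h2 : T.entry c ≠ v + 1) :
    (bk hs T J v hJ).entry c = T.entry c := by
  simp [bk, h1, h2]

theorem bk_entry_of_eq {c : ℕ × ℕ} (h : T.entry c = v ∨ T.entry c = v + 1) :
    (bk hs T J v hJ).entry c = v ∨ (bk hs T J v hJ).entry c = v + 1 := by
  simp only [bk]
  split_ifs <;> simp_all

theorem bk_hJ : ∀ i, (i, J) ∈ A → (bk hs T J v hJ).entry (i, J) ≠ v := by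
  intro i hi
  rw [bk_entry_of_ge hs T hJ le_rfl]
  exact hJ i hi

theorem cut_bk_of_ne {w : ℕ} (hw : w ≠ v + 1) :
    cut a b (bk hs T J v hJ) J w = cut a b T J w := by
  funext i
  refine hs.cut_unique _ (le_cut _ _ _ _) (hs.cut_le _ _ _ _) fun j hm hj => ?_
  rw [hs.lt_cut_iff T w hm hj]
  by_cases h : T.entry (i, j) = v ∨ T.entry (i, j) = v + 1
  · have := bk_entry_of_eq hs T hJ h
    omega
  · push Not at h
    rw [bk_entry_of_ne hs T hJ h.1 h.2]

theorem cut_bk : cut a b (bk hs T J v hJ) J (v + 1) =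
    toggle (cut a b T J v) (cut a b T J (v + 1)) (cut a b T J (v + 2)) := by
  funext i
  have ht := (hs.interlace T J v).toggle
  have h1 := ht.pm i
  have h2 := ht.mq i
  have h3 := le_cut (a := a) (b := b) T J v i
  have h4 := hs.cut_le T J (v + 2) i
  refine hs.cut_unique _ (by omega) (by omega) fun j hm hj => ?_
  have := hs.lt_cut_iff T v hm hj
  have := hs.lt_cut_iff T (v + 2) hm hj
  by_cases h : T.entry (i, j) = v ∨ T.entry (i, j) = v + 1
  · simp only [bk, hm, hj, h, true_and, if_true]
    split_ifs <;> omega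
  · push Not at h
    rw [bk_entry_of_ne hs T hJ h.1 h.2]
    omega

theorem bk_bk : bk hs (bk hs T J v hJ) J v (bk_hJ hs T hJ) = T := by
  refine SSYT.ext' fun c hc => ?_
  rcases Nat.lt_or_ge c.2 J with hj | hj
  swap
  · rw [bk_entry_of_ge _ _ _ hj, bk_entry_of_ge _ _ _ hj]
  by_cases h : T.entry c = v ∨ T.entry c = v + 1
  · have h' := bk_entry_of_eq hs T hJ h
    obtain ⟨i, j⟩ := c
    have key : (bk hs (bk hs T J v hJ) J v (bk_hJ hs T hJ)).entry (i, j) =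
        if j < cut a b T J (v + 1) i then v else v + 1 := by
      rw [← (hs.interlace T J v).toggle_toggle, ← cut_bk hs T hJ,
        ← cut_bk_of_ne hs T hJ (w := v) (by omega), ← cut_bk_of_ne hs T hJ (w := v + 2) (by omega)]
      generalize_proofs
      generalize bk hs T J v hJ = T' at *
      simp only [bk, hc, hj, h', true_and, if_true]
    rw [key]
    have := hs.lt_cut_iff T (v + 1) hc hj
    split_ifs <;> omega
  · push Not at h
    have h' := bk_entry_of_ne hs T hJ h.1 h.2
    rw [bk_entry_of_ne _ _ _ (by rw [h']; exact h.1) (by rw [h']; exact h.2), h']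

/-- The number of entries `v` to the left of the column `J`. -/
def lcnt (T : SSYT A) (J v : ℕ) : ℕ := #{c ∈ A | c.2 < J ∧ T.entry c = v}

theorem content_eq (T : SSYT A) (J v : ℕ) : content T v = cnt T J v + lcnt T J v := by
  rw [content_apply, cnt, lcnt, ← card_filter_add_card_filter_not (p := fun c => J ≤ c.2),
    filter_filter, filter_filter]
  congr 2 <;> · ext c; simp only [mem_filter, not_le]; tauto

theorem cnt_bk {J' : ℕ} (hJJ : J ≤ J') (w : ℕ) : cnt (bk hs T J v hJ) J' w = cnt T J' w := by
  unfold cnt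
  congr 1
  refine filter_congr fun c _ => ?_
  refine and_congr_right fun h => ?_
  rw [bk_entry_of_ge hs T hJ (hJJ.trans h)]

theorem lcnt_bk_of_ne {w : ℕ} (h1 : w ≠ v) (h2 : w ≠ v + 1) :
    lcnt (bk hs T J v hJ) J w = lcnt T J w := by
  unfold lcnt
  congr 1
  refine filter_congr fun c _ => ?_
  refine and_congr_right fun _ => ?_
  by_cases h : T.entry c = v ∨ T.entry c = v + 1
  · have := bk_entry_of_eq hs T hJ h
    omega
  · push Not at h
    rw [bk_entry_of_ne hs T hJ h.1 h.2]

/-- The involution exchanges the numbers of entries `v` and `v + 1` to the left of `J`. -/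
theorem lcnt_bk : lcnt (bk hs T J v hJ) J v = lcnt T J (v + 1) := by
  classical
  have hn : ∀ c ∈ A, c.1 < ht A := fun c hc =>
    Nat.lt_of_succ_le (le_sup (f := fun c : ℕ × ℕ => c.1 + 1) hc)
  have h1 := hs.card_cut (bk hs T J v hJ) J v _ hn
  have h2 := hs.card_cut T J (v + 1) _ hn
  rw [cut_bk, cut_bk_of_ne hs T hJ (by omega)] at h1
  have h3 := (hs.interlace T J v).sum_toggle (ht A) ?_
  · unfold lcnt
    have e : v + 1 + 1 = v + 2 := rfl
    rw [e] at h2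
    omega
  · have g1 := le_cut (a := a) (b := b) T J v (ht A)
    have g2 := hs.cut_le T J (v + 2) (ht A)
    have : b (ht A) ≤ a (ht A) := by
      by_contra hlt
      exact lt_irrefl _ (hn _ ((hs.mem (ht A) (a (ht A))).2 (by omega)))
    omega

theorem lcnt_bk' : lcnt (bk hs T J v hJ) J (v + 1) = lcnt T J v := by
  have := lcnt_bk hs (bk hs T J v hJ) (bk_hJ hs T hJ)
  rw [bk_bk] at this
  exact this.symm

end BK

/-! ### Cancellation of the tableaux that are not lattice -/

section FirstBad
variable {A : Diagram} {a b : ℕ → ℕ}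

/-- `J` is the rightmost column at which the column reading word of `T` violates the lattice
condition, and `v` is the smallest entry for which it does so there. -/
def FirstBad (T : SSYT A) (J v : ℕ) : Prop :=
  cnt T J v < cnt T J (v + 1) ∧ (∀ J', J < J' → ∀ w, cnt T J' (w + 1) ≤ cnt T J' w) ∧
    ∀ w < v, cnt T J (w + 1) ≤ cnt T J w

theorem exists_firstBad {T : SSYT A} (h : ¬ ColLattice T) : ∃ J v, FirstBad T J v := by
  classical
  have hP : ∃ J, ∃ v, cnt T J v < cnt T J (v + 1) := by
    simpa [ColLattice] using h
  obtain ⟨J₀, h₀⟩ := hP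
  have hbd : ∀ J, (∃ v, cnt T J v < cnt T J (v + 1)) → J ≤ wd A := by
    rintro J ⟨v, hv⟩
    have hpos : 0 < cnt T J (v + 1) := by omega
    obtain ⟨c, hc⟩ := card_pos.1 hpos
    rw [mem_filter] at hc
    have := le_sup (f := fun c : ℕ × ℕ => c.2 + 1) hc.1
    unfold wd
    omega
  set J := Nat.findGreatest (fun J => ∃ v, cnt T J v < cnt T J (v + 1)) (wd A) with hJ
  have hs : ∃ v, cnt T J v < cnt T J (v + 1) :=
    Nat.findGreatest_spec (P := fun J => ∃ v, cnt T J v < cnt T J (v + 1)) (hbd J₀ h₀) h₀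
  refine ⟨J, Nat.find hs, Nat.find_spec hs, ?_, ?_⟩
  · intro J' hJ' w
    by_contra hlt
    push Not at hlt
    exact Nat.findGreatest_is_greatest hJ' (hbd J' ⟨w, hlt⟩) ⟨w, hlt⟩
  · intro w hw
    have := Nat.find_min hs hw
    omega

theorem FirstBad.unique {T : SSYT A} {J v J' v' : ℕ} (h : FirstBad T J v)
    (h' : FirstBad T J' v') : J = J' ∧ v = v' := by
  obtain ⟨h1, h2, h3⟩ := h
  obtain ⟨h1', h2', h3'⟩ := h'
  have e : J = J' := by
    rcases lt_trichotomy J J' with hl | hl | hl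
    · have := h2 _ hl v'; omega
    · exact hl
    · have := h2' _ hl v; omega
  subst e
  refine ⟨rfl, ?_⟩
  rcases lt_trichotomy v v' with hl | hl | hl
  · have := h3' _ hl; omega
  · exact hl
  · have := h3 _ hl; omega

/-- At the first violation the column `J` contains `v + 1` but not `v`; in particular the
Bender–Knuth involution to the left of `J` is defined. -/
theorem FirstBad.hJ {T : SSYT A} {J v : ℕ} (hs : IsSkew A a b) (h : FirstBad T J v) :
    ∀ i, (i, J) ∈ A → T.entry (i, J) ≠ v := by
  intro i hi he
  obtain ⟨h1, h2, -⟩ := h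
  have g1 := hs.card_cols_le T J 1 (v + 1)
  have g2 := h2 (J + 1) (by omega) v
  have g3 : cnt T (J + 1) v < cnt T J v := by
    refine card_lt_card ⟨?_, ?_⟩
    · intro c
      simp only [mem_filter]
      rintro ⟨k1, k2, k3⟩
      exact ⟨k1, by omega, k3⟩
    · intro hsub
      have := hsub (mem_filter.2 ⟨hi, le_rfl, he⟩)
      simp at this
  omega

theorem FirstBad.cnt_eq {T : SSYT A} {J v : ℕ} (hs : IsSkew A a b) (h : FirstBad T J v) :
    cnt T J (v + 1) = cnt T J v + 1 := by
  obtain ⟨h1, h2, -⟩ := h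
  have g1 := hs.card_cols_le T J 1 (v + 1)
  have g2 := h2 (J + 1) (by omega) v
  have g3 := cnt_anti T (Nat.le_succ J) v
  simp only [Nat.succ_eq_add_one] at *
  omega

/-- The first violation is located in the columns that the involution leaves unchanged. -/
theorem FirstBad.bk {T : SSYT A} {J v : ℕ} (hs : IsSkew A a b) (h : FirstBad T J v) :
    FirstBad (bk hs T J v (h.hJ hs)) J v := by
  obtain ⟨h1, h2, h3⟩ := id h
  refine ⟨?_, fun J' hJ' w => ?_, fun w hw => ?_⟩
  · rwa [cnt_bk _ _ _ le_rfl, cnt_bk _ _ _ le_rfl]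
  · rw [cnt_bk _ _ _ hJ'.le, cnt_bk _ _ _ hJ'.le]; exact h2 J' hJ' w
  · rw [cnt_bk _ _ _ le_rfl, cnt_bk _ _ _ le_rfl]; exact h3 w hw

theorem FirstBad.not_colLattice {T : SSYT A} {J v : ℕ} (h : FirstBad T J v) :
    ¬ ColLattice T := fun hT => by
  have := hT J v
  have := h.1
  omega

end FirstBad

section Tab
variable {A : Diagram} {a b : ℕ → ℕ}

/-- The semistandard tableaux of shape `A` with entries in `{0, …, n - 1}`. -/
def Tab (n : ℕ) (A : Diagram) : Type := {T : SSYT A // ∀ c ∈ A, T.entry c < n}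

instance (n : ℕ) (A : Diagram) : Finite (Tab n A) := by
  refine Finite.of_injective (β := A → Fin n) (fun T c => ⟨T.1.entry c, T.2 c c.2⟩) ?_
  intro T T' h
  refine Subtype.ext (SSYT.ext' fun c hc => ?_)
  have := congrFun h ⟨c, hc⟩
  simpa using this

noncomputable instance (n : ℕ) (A : Diagram) : Fintype (Tab n A) := Fintype.ofFinite _

/-- The content of a tableau with entries in `{0, …, n - 1}`. -/
noncomputable def Tab.cont {n : ℕ} (T : Tab n A) : Fin n → ℕ := fun i => content T.1 i

theorem bk_lt {n : ℕ} (hs : IsSkew A a b) (T : SSYT A) {J v : ℕ}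
    (hJ : ∀ i, (i, J) ∈ A → T.entry (i, J) ≠ v) (hv : v + 1 < n) (hT : ∀ c ∈ A, T.entry c < n) :
    ∀ c ∈ A, (bk hs T J v hJ).entry c < n := by
  intro c hc
  by_cases h : T.entry c = v ∨ T.entry c = v + 1
  · have := bk_entry_of_eq hs T hJ h
    omega
  · push Not at h
    rw [bk_entry_of_ne hs T hJ h.1 h.2]
    exact hT c hc

theorem Tab.firstBad_lt {n : ℕ} (T : Tab n A) {J v : ℕ} (h : FirstBad T.1 J v) : v + 1 < n := by
  have hpos : 0 < cnt T.1 J (v + 1) := by have := h.1; omega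
  obtain ⟨c, hc⟩ := card_pos.1 hpos
  rw [mem_filter] at hc
  have := T.2 c hc.1
  omega

/-- The staircase weight `(n - 1, …, 1, 0)`. -/
def rho (n : ℕ) : Fin n → ℕ := fun i => n - 1 - i

/-- The signed number of permutations `w` with `u = t ∘ w`, written as a determinant. -/
def altDelta {n : ℕ} (t u : Fin n → ℕ) : ℤ :=
  Matrix.det (Matrix.of fun i j => if u i = t j then (1 : ℤ) else 0)

theorem altDelta_perm {n : ℕ} (t u : Fin n → ℕ) (σ : Equiv.Perm (Fin n)) :
    altDelta t (u ∘ σ) = Equiv.Perm.sign σ * altDelta t u := by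
  have := Matrix.det_permute σ (Matrix.of fun i j => if u i = t j then (1 : ℤ) else 0)
  rw [Int.cast_id] at this
  exact this

theorem strictAnti_eq_of_subset {n : ℕ} {t u : Fin n → ℕ} (ht : StrictAnti t) (hu : StrictAnti u)
    (h : ∀ i, ∃ j, u i = t j) : u = t := by
  choose f hf using h
  have hmono : StrictMono f := by
    intro i j hij
    have := hu hij
    rw [hf i, hf j] at this
    exact (ht.lt_iff_gt).1 this
  have : f = id := by
    have := Subsingleton.elim (hmono.orderIsoOfSurjective f
      (Finite.injective_iff_surjective.1 hmono.injective)) (OrderIso.refl _)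
    funext i
    exact congrArg (fun e : Fin n ≃o Fin n => e i) this
  funext i
  rw [hf i, this]; rfl

theorem altDelta_strictAnti {n : ℕ} {t u : Fin n → ℕ} (ht : StrictAnti t) (hu : StrictAnti u) :
    altDelta t u = if u = t then 1 else 0 := by
  unfold altDelta
  split_ifs with h
  · subst h
    convert Matrix.det_one (n := Fin n) (R := ℤ)
    ext i j
    simp [Matrix.one_apply, hu.injective.eq_iff]
  · have : ¬ ∀ i, ∃ j, u i = t j := fun h' => h (strictAnti_eq_of_subset ht hu h')
    push Not at this
    obtain ⟨i, hi⟩ := this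
    exact Matrix.det_eq_zero_of_row_eq_zero i fun j => by simp [hi j]

theorem exists_perm_of_altDelta_ne_zero {n : ℕ} {t u : Fin n → ℕ} (h : altDelta t u ≠ 0) :
    ∃ w : Equiv.Perm (Fin n), ∀ i, u (w i) = t i := by
  unfold altDelta at h
  rw [Matrix.det_apply] at h
  obtain ⟨w, -, hw⟩ := exists_ne_zero_of_sum_ne_zero h
  refine ⟨w, fun i => ?_⟩
  by_contra hne
  apply hw
  rw [prod_eq_zero (mem_univ i), smul_zero]
  simp [hne]

/-- Stembridge's cancellation: the Bender–Knuth involution applied to the left of the first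
violation of the lattice condition acts on content plus staircase as a transposition. -/
theorem sum_not_colLattice {n : ℕ} (hs : IsSkew A a b) (t : Fin n → ℕ) [DecidablePred
    fun T : Tab n A => ¬ ColLattice T.1] :
    ∑ T : Tab n A with ¬ ColLattice T.1, altDelta t (T.cont + rho n) = 0 := by
  classical
  have hex : ∀ T ∈ ({T : Tab n A | ¬ ColLattice T.1} : Finset (Tab n A)),
      ∃ J v, FirstBad T.1 J v := fun T hT => exists_firstBad (mem_filter.1 hT).2
  choose fJ fv hF using hex
  let g : ∀ T ∈ ({T : Tab n A | ¬ ColLattice T.1} : Finset (Tab n A)), Tab n A := fun T hT =>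
    ⟨bk hs T.1 (fJ T hT) (fv T hT) ((hF T hT).hJ hs),
      bk_lt hs T.1 _ (T.firstBad_lt (hF T hT)) T.2⟩
  have hneg : ∀ T hT, altDelta t (T.cont + rho n) + altDelta t ((g T hT).cont + rho n) = 0 := by
    intro T hT
    have hlt := T.firstBad_lt (hF T hT)
    have hc := (hF T hT).cnt_eq hs
    have key : (g T hT).cont + rho n = (T.cont + rho n) ∘
        Equiv.swap (⟨fv T hT, by omega⟩ : Fin n) ⟨fv T hT + 1, hlt⟩ := by
      funext i
      have hcont : ∀ w, content (g T hT).1 w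
          = cnt T.1 (fJ T hT) w + lcnt (g T hT).1 (fJ T hT) w := by
        intro w
        rw [content_eq _ (fJ T hT), cnt_bk _ _ _ le_rfl]
      simp only [Pi.add_apply, Tab.cont, Function.comp, rho]
      rw [hcont]
      rcases eq_or_ne i ⟨fv T hT, by omega⟩ with rfl | h1
      · rw [Equiv.swap_apply_left, content_eq T.1 (fJ T hT)]
        rw [show lcnt (g T hT).1 (fJ T hT) (fv T hT) = _ from lcnt_bk hs T.1 ((hF T hT).hJ hs)]
        simp only
        omega
      rcases eq_or_ne i ⟨fv T hT + 1, hlt⟩ with rfl | h2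
      · rw [Equiv.swap_apply_right, content_eq T.1 (fJ T hT)]
        rw [show lcnt (g T hT).1 (fJ T hT) (fv T hT + 1) = _ from lcnt_bk' hs T.1 ((hF T hT).hJ hs)]
        simp only
        omega
      · rw [Equiv.swap_apply_of_ne_of_ne h1 h2, content_eq T.1 (fJ T hT)]
        rw [show lcnt (g T hT).1 (fJ T hT) i = _ from lcnt_bk_of_ne hs T.1 ((hF T hT).hJ hs)
          (fun e => h1 (Fin.ext e)) (fun e => h2 (Fin.ext e))]
    rw [key, altDelta_perm, Equiv.Perm.sign_swap (by simp [Fin.ext_iff])]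
    simp
  refine sum_involution g hneg ?_ ?_ ?_
  · intro T hT h0 he
    have := hneg T hT
    rw [he] at this
    omega
  · intro T hT
    exact mem_filter.2 ⟨mem_univ _, ((hF T hT).bk hs).not_colLattice⟩
  · intro T hT
    have hT' : g T hT ∈ ({T : Tab n A | ¬ ColLattice T.1} : Finset (Tab n A)) :=
      mem_filter.2 ⟨mem_univ _, ((hF T hT).bk hs).not_colLattice⟩
    obtain ⟨e1, e2⟩ := ((hF T hT).bk hs).unique (hF (g T hT) hT')
    apply Subtype.ext
    have hb := bk_bk hs T.1 ((hF T hT).hJ hs)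
    refine Eq.trans ?_ hb
    show bk hs (g T hT).1 _ _ ((hF (g T hT) hT').hJ hs) = _
    congr 1 <;> [exact e1.symm; exact e2.symm]

theorem rho_strictAnti (n : ℕ) : StrictAnti (rho n) := fun i j h => by
  have := j.2
  have : (i : ℕ) < j := h
  simp only [rho]; omega

theorem antitone_add_rho {n : ℕ} {d : Fin n → ℕ} (hd : Antitone d) : StrictAnti (d + rho n) :=
  fun i j h => by
    have := hd h.le
    have := rho_strictAnti n h
    simp only [Pi.add_apply]; omega

theorem ColLattice.antitone {T : SSYT A} (h : ColLattice T) : Antitone (content T) := by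
  refine antitone_nat_of_succ_le fun v => ?_
  rw [← cnt_zero, ← cnt_zero]
  exact h 0 v

/-- The number of lattice tableaux of a given content as an alternating sum of numbers of
semistandard tableaux. -/
theorem sum_altDelta {n : ℕ} (hs : IsSkew A a b) {d : Fin n → ℕ} (hd : Antitone d)
    [DecidablePred fun T : Tab n A => IsLattice T.1 ∧ T.cont = d] :
    ∑ T : Tab n A, altDelta (d + rho n) (T.cont + rho n)
      = #{T : Tab n A | IsLattice T.1 ∧ T.cont = d} := by
  classical
  rw [← sum_filter_add_sum_filter_not univ (fun T : Tab n A => ColLattice T.1),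
    sum_not_colLattice hs, add_zero, card_filter, Nat.cast_sum, sum_filter]
  refine sum_congr rfl fun T _ => ?_
  have hiff := hs.isLattice_iff T.1
  by_cases h : ColLattice T.1
  · have hc : Antitone T.cont := fun i j hij => h.antitone hij
    rw [altDelta_strictAnti (antitone_add_rho hd) (antitone_add_rho hc)]
    simp [hiff, h]
  · simp [hiff, h]

end Tab

/-! ### The Littlewood–Richardson rule -/

section Symm
variable {A : Diagram} {a b : ℕ → ℕ}

theorem lt_wd {i j : ℕ} (h : (i, j) ∈ A) : j < wd A :=
  Nat.lt_of_succ_le (le_sup (f := fun c : ℕ × ℕ => c.2 + 1) h)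

theorem lt_ht {i j : ℕ} (h : (i, j) ∈ A) : i < ht A :=
  Nat.lt_of_succ_le (le_sup (f := fun c : ℕ × ℕ => c.1 + 1) h)

/-- The Bender–Knuth involution on the whole tableau, obtained by choosing `J = wd A`. -/
theorem card_cont_swap_le {n : ℕ} (hs : IsSkew A a b) (e : Fin n → ℕ) (v : ℕ) (hv : v + 1 < n) :
    #{T : Tab n A | T.cont = e} ≤
      #{T : Tab n A | T.cont = e ∘ Equiv.swap (⟨v, by omega⟩ : Fin n) ⟨v + 1, hv⟩} := by
  classical
  have hJ : ∀ T : SSYT A, ∀ i, (i, wd A) ∈ A → T.entry (i, wd A) ≠ v := fun T i h =>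
    absurd (lt_wd h) (lt_irrefl _)
  refine card_le_card_of_injOn
    (fun T => ⟨bk hs T.1 (wd A) v (hJ T.1), bk_lt hs T.1 _ hv T.2⟩) ?_ ?_
  · intro T hT
    simp only [coe_filter, mem_univ, true_and, Set.mem_ofPred_eq] at hT ⊢
    rw [← hT]
    have hcont : ∀ w, content (bk hs T.1 (wd A) v (hJ T.1)) w
        = cnt T.1 (wd A) w + lcnt (bk hs T.1 (wd A) v (hJ T.1)) (wd A) w := by
      intro w
      rw [content_eq _ (wd A), cnt_bk _ _ _ le_rfl]
    have hz : ∀ w, cnt T.1 (wd A) w = 0 := by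
      intro w
      unfold cnt
      rw [card_eq_zero, filter_eq_empty_iff]
      rintro ⟨i, j⟩ h ⟨h1, -⟩
      have := lt_wd h
      simp only at h1; omega
    funext i
    simp only [Tab.cont, Function.comp]
    rw [hcont]
    rcases eq_or_ne i ⟨v, by omega⟩ with rfl | h1
    · rw [Equiv.swap_apply_left, content_eq T.1 (wd A), lcnt_bk hs T.1 (hJ T.1), hz, hz]
    rcases eq_or_ne i ⟨v + 1, hv⟩ with rfl | h2
    · rw [Equiv.swap_apply_right, content_eq T.1 (wd A), lcnt_bk' hs T.1 (hJ T.1), hz, hz]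
    · rw [Equiv.swap_apply_of_ne_of_ne h1 h2, content_eq T.1 (wd A),
        lcnt_bk_of_ne hs T.1 (hJ T.1) (fun e => h1 (Fin.ext e)) (fun e => h2 (Fin.ext e))]
  · intro T _ T' _ h
    have h' := congrArg Subtype.val h
    apply Subtype.ext
    simp only at h'
    rw [← bk_bk hs T.1 (hJ T.1), ← bk_bk hs T'.1 (hJ T'.1)]
    congr 1

/-- Schur functions of skew diagrams are symmetric. -/
theorem card_cont_perm {n : ℕ} (hs : IsSkew A a b) (e : Fin n → ℕ) (σ : Equiv.Perm (Fin n)) :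
    #{T : Tab n A | T.cont = e ∘ σ} = #{T : Tab n A | T.cont = e} := by
  classical
  cases n with
  | zero => rw [Subsingleton.elim (e ∘ σ) e]
  | succ n =>
  have hσ : σ ∈ Submonoid.closure (Set.range fun i : Fin n ↦ Equiv.swap i.castSucc i.succ) := by
    rw [Equiv.Perm.mclosure_swap_castSucc_succ]; trivial
  induction hσ using Submonoid.closure_induction generalizing e with
  | mem x hx =>
    obtain ⟨i, rfl⟩ := hx
    have h1 := fun e => card_cont_swap_le hs (n := n + 1) e i (by omega)
    have e1 : (⟨(i : ℕ), by omega⟩ : Fin (n + 1)) = i.castSucc := rfl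
    have e2 : (⟨(i : ℕ) + 1, by omega⟩ : Fin (n + 1)) = i.succ := rfl
    rw [e1, e2] at h1
    refine le_antisymm ((h1 _).trans_eq ?_) (h1 e)
    congr 2
    ext T
    rw [Function.comp_assoc]
    rw [← Equiv.Perm.coe_mul, Equiv.swap_mul_self]
    simp
  | one => simp
  | mul x y _ _ hx hy =>
    rw [Equiv.Perm.coe_mul, ← Function.comp_assoc, hy, hx]

end Symm

section Inversion

theorem exists_perm_antitone {n : ℕ} (e : Fin n → ℕ) :
    ∃ σ : Equiv.Perm (Fin n), Antitone (e ∘ σ) := by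
  refine ⟨Fin.revPerm.trans (Tuple.sort e), fun i j h => ?_⟩
  have := Tuple.monotone_sort e (Fin.rev_le_rev.2 h)
  simpa using this

/-- If `e + ρ` is a rearrangement of `d + ρ` for a partition `d`, then the rearrangement inequality
shows that the norm of `e` is at least that of `d`, with equality only if `e = d`. -/
theorem eq_of_perm_of_sq_le {n : ℕ} {d e : Fin n → ℕ} (hd : Antitone d)
    (w : Equiv.Perm (Fin n)) (hw : ∀ i, (e + rho n) (w i) = (d + rho n) i)
    (hle : ∑ i, e i ^ 2 ≤ ∑ i, d i ^ 2) : e = d := by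
  have hmv : Monovary (fun i => (d i : ℤ)) (fun i => (rho n i : ℤ)) := by
    intro i j hij
    have : j < i := (rho_strictAnti n).lt_iff_gt.1 (by simpa using hij)
    show (d i : ℤ) ≤ d j
    exact_mod_cast hd this.le
  have h1 := hmv.sum_mul_comp_perm_le_sum_mul (σ := w)
  have h2 : ∑ i, (e i : ℤ) ^ 2 = ∑ i, (e (w i) : ℤ) ^ 2 := (Equiv.sum_comp w _).symm
  have h3 : ∀ i, (e (w i) : ℤ) = d i + rho n i - rho n (w i) := by
    intro i
    have := hw i
    simp only [Pi.add_apply] at this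
    have : (e (w i) : ℤ) + rho n (w i) = d i + rho n i := by exact_mod_cast this
    linarith
  have h4 : ∑ i, (e (w i) : ℤ) ^ 2 = ∑ i, (d i : ℤ) ^ 2 +
      2 * (∑ i, (d i : ℤ) * rho n i - ∑ i, (d i : ℤ) * rho n (w i)) +
      ∑ i, ((rho n i : ℤ) - rho n (w i)) ^ 2 := by
    rw [← sum_sub_distrib, mul_sum, ← sum_add_distrib, ← sum_add_distrib]
    refine sum_congr rfl fun i _ => ?_
    rw [h3]; ring
  have hle' : ∑ i, (e i : ℤ) ^ 2 ≤ ∑ i, (d i : ℤ) ^ 2 := by exact_mod_cast hle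
  have h5 : ∑ i, ((rho n i : ℤ) - rho n (w i)) ^ 2 = 0 :=
    le_antisymm (by linarith) (sum_nonneg fun i _ => sq_nonneg _)
  have h6 : ∀ i, w i = i := by
    intro i
    have := (sum_eq_zero_iff_of_nonneg fun i _ => sq_nonneg _).1 h5 i (mem_univ i)
    have h7 : (rho n i : ℤ) = rho n (w i) := by
      have := pow_eq_zero_iff (two_ne_zero) |>.1 this
      linarith
    exact ((rho_strictAnti n).injective (by exact_mod_cast h7)).symm
  funext i
  have := hw i
  rw [h6] at this
  simpa using this

/-- A symmetric function all of whose products with the Vandermonde alternant have vanishing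
coefficients at the strictly decreasing exponents is zero: otherwise look at a partition of
maximal norm in its support. -/
theorem eq_zero_of_altDelta {n : ℕ} (g : (Fin n → ℕ) →₀ ℤ)
    (hsymm : ∀ e (σ : Equiv.Perm (Fin n)), g (e ∘ σ) = g e)
    (h0 : ∀ d, Antitone d → g.sum (fun e c => c * altDelta (d + rho n) (e + rho n)) = 0) :
    g = 0 := by
  classical
  by_contra hne
  obtain ⟨e₀, he₀, hmax⟩ := exists_max_image g.support (fun e => ∑ i, e i ^ 2)
    (Finsupp.support_nonempty_iff.2 hne)
  obtain ⟨σ, hσ⟩ := exists_perm_antitone e₀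
  have hnorm : ∑ i, (e₀ ∘ σ) i ^ 2 = ∑ i, e₀ i ^ 2 := Equiv.sum_comp σ (fun i => e₀ i ^ 2)
  have hg : g (e₀ ∘ σ) ≠ 0 := by rw [hsymm]; exact Finsupp.mem_support_iff.1 he₀
  have := h0 _ hσ
  rw [Finsupp.sum, sum_eq_single (e₀ ∘ σ)] at this
  · rw [altDelta_strictAnti (antitone_add_rho hσ) (antitone_add_rho hσ)] at this
    simp at this
    exact hg this
  · intro e he hee
    by_contra hnz
    obtain ⟨w, hw⟩ := exists_perm_of_altDelta_ne_zero (right_ne_zero_of_mul hnz)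
    exact hee (eq_of_perm_of_sq_le hσ w hw ((hmax e he).trans_eq hnorm.symm))
  · intro h
    simp [Finsupp.notMem_support_iff.1 h]

end Inversion

section Straight
variable {A : Diagram} {b : ℕ → ℕ}

theorem straight_entry (hs : IsSkew A (fun _ => 0) b) {T : SSYT A} (hT : IsLattice T) (i : ℕ) :
    ∀ j, (i, j) ∈ A → T.entry (i, j) = i := by
  induction i using Nat.strong_induction_on with
  | _ i ih =>
  intro j hij
  have hge : i ≤ T.entry (i, j) := by
    cases i with
    | zero => exact Nat.zero_le _
    | succ i =>
      have hm : (i, j) ∈ A := by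
        rw [hs.mem] at *
        have := hs.anti_b (Nat.le_succ i)
        simp only [Nat.succ_eq_add_one] at this
        omega
      have := T.colStrict i j hm hij
      have := ih i (by omega) j hm
      omega
  refine le_antisymm ?_ hge
  -- the rightmost entry of the row is preceded, in the reading word, by entries `< i` only
  have hij' := (hs.mem i j).1 hij
  have hc : (i, b i - 1) ∈ A := (hs.mem _ _).2 (by omega)
  refine (hs.row_le T hij hc (by omega)).trans ?_
  by_contra hlt
  obtain ⟨v, hv⟩ : ∃ v, T.entry (i, b i - 1) = v + 1 := ⟨T.entry (i, b i - 1) - 1, by omega⟩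
  have h1 := hT _ hc v
  have h2 : 0 < #{c' ∈ A | ReadBefore c' (i, b i - 1) ∧ T.entry c' = v + 1} :=
    card_pos.2 ⟨(i, b i - 1), mem_filter.2 ⟨hc, Or.inr ⟨rfl, le_rfl⟩, hv⟩⟩
  have h3 : #{c' ∈ A | ReadBefore c' (i, b i - 1) ∧ T.entry c' = v} = 0 := by
    rw [card_eq_zero, filter_eq_empty_iff]
    rintro ⟨i', j'⟩ h ⟨h4 | h4, h5⟩
    · simp only at h4
      have := ih i' h4 j' h
      omega
    · simp only at h4
      obtain ⟨rfl, h4⟩ := h4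
      have h6 := (hs.mem _ _).1 h
      obtain rfl : j' = b i' - 1 := by omega
      omega
  omega

/-- The tableau of straight shape all of whose entries in row `i` are `i`. -/
def superstandard (A : Diagram) : SSYT A where
  entry c := if c ∈ A then c.1 else 0
  rowWeak i j h h' := by simp [h, h']
  colStrict i j h h' := by simp [h, h']
  zero_outside c h := by simp [h]

theorem superstandard_entry {c : ℕ × ℕ} (h : c ∈ A) : (superstandard A).entry c = c.1 :=
  if_pos h

theorem superstandard_lattice (hs : IsSkew A (fun _ => 0) b) : IsLattice (superstandard A) := by
  classical
  rw [hs.isLattice_iff]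
  intro J v
  refine card_le_card_of_injOn (fun c => (c.1 - 1, c.2)) ?_ ?_
  · rintro ⟨i, j⟩ h
    simp only [coe_filter, Set.mem_ofPred_eq] at h ⊢
    obtain ⟨h1, h2, h3⟩ := h
    simp only [superstandard, h1, if_true] at h3
    subst h3
    have hm : (v, j) ∈ A := by
      rw [hs.mem] at *
      have := hs.anti_b (Nat.le_succ v)
      simp only [Nat.succ_eq_add_one] at this
      omega
    simp [superstandard, hm, h2]
  · rintro ⟨i, j⟩ h ⟨i', j'⟩ h' heq
    simp only [coe_filter, Set.mem_ofPred_eq] at h h'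
    obtain ⟨h1, h2, h3⟩ := h
    obtain ⟨h1', h2', h3'⟩ := h'
    simp only [superstandard, h1, h1', if_true] at h3 h3'
    simp only [Prod.mk.injEq] at heq ⊢
    omega

theorem superstandard_content (hs : IsSkew A (fun _ => 0) b) (v : ℕ) :
    content (superstandard A) v = b v := by
  rw [content_apply]
  have : ({c ∈ A | (superstandard A).entry c = v} : Finset _) =
      (range (b v)).image (fun j => (v, j)) := by
    ext ⟨i, j⟩
    simp only [mem_filter, mem_image, mem_range, Prod.mk.injEq]
    constructor
    · rintro ⟨h1, h2⟩
      rw [superstandard_entry h1] at h2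
      subst h2
      exact ⟨j, ((hs.mem _ _).1 h1).2, rfl, rfl⟩
    · rintro ⟨j, h, rfl, rfl⟩
      have : (v, j) ∈ A := (hs.mem _ _).2 ⟨Nat.zero_le _, h⟩
      exact ⟨this, superstandard_entry this⟩
  rw [this, card_image_of_injective _ (Prod.mk_right_injective v), card_range]

theorem lattice_iff_superstandard (hs : IsSkew A (fun _ => 0) b) (T : SSYT A) :
    IsLattice T ↔ T = superstandard A := by
  constructor
  · intro hT
    refine SSYT.ext' ?_
    rintro ⟨i, j⟩ h
    rw [straight_entry hs hT i j h]
    simp [superstandard, h]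
  · rintro rfl
    exact superstandard_lattice hs

theorem isSkew_diagramOfF {d : ℕ →₀ ℕ} (hd : Antitone d) :
    IsSkew (diagramOfF d) (fun _ => 0) d where
  anti_a := antitone_const
  anti_b := hd
  le _ := Nat.zero_le _
  mem i j := by
    simp only [diagramOfF, mem_biUnion, Finsupp.mem_support_iff, mem_image, mem_range,
      Prod.mk.injEq, Nat.zero_le, true_and]
    constructor
    · rintro ⟨i, h1, j, h2, rfl, rfl⟩; exact h2
    · intro h; exact ⟨i, by omega, j, h, rfl, rfl⟩

end Straight

section LR
variable {A : Diagram} {a b : ℕ → ℕ}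

/-- The restriction of a content to the first `n` values. -/
def res (n : ℕ) (d : ℕ →₀ ℕ) : Fin n → ℕ := fun i => d i

theorem entry_lt_of_content {n : ℕ} {d : ℕ →₀ ℕ} (hd : ∀ i, n ≤ i → d i = 0) {T : SSYT A}
    (h : content T = d) {c : ℕ × ℕ} (hc : c ∈ A) : T.entry c < n := by
  by_contra hlt
  have h1 := hd _ (not_lt.1 hlt)
  rw [← h, content_apply, card_eq_zero, filter_eq_empty_iff] at h1
  exact h1 hc rfl

theorem Tab.cont_eq_res_iff {n : ℕ} {d : ℕ →₀ ℕ} (hd : ∀ i, n ≤ i → d i = 0) (T : Tab n A) :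
    T.cont = res n d ↔ content T.1 = d := by
  constructor
  · intro h
    ext i
    rcases Nat.lt_or_ge i n with hi | hi
    · exact congrFun h ⟨i, hi⟩
    · rw [hd i hi, content_apply, card_eq_zero, filter_eq_empty_iff]
      intro c hc heq
      have := T.2 c hc
      omega
  · intro h
    funext i
    exact DFunLike.congr_fun h (i : ℕ)

theorem card_tab_eq (n : ℕ) (d : ℕ →₀ ℕ) (hd : ∀ i, n ≤ i → d i = 0) (P : SSYT A → Prop)
    [DecidablePred fun T : Tab n A => P T.1 ∧ T.cont = res n d] :
    Nat.card {T : SSYT A // P T ∧ content T = d} = #{T : Tab n A | P T.1 ∧ T.cont = res n d} := by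
  classical
  rw [← Fintype.card_subtype, ← Nat.card_eq_fintype_card]
  refine Nat.card_congr ⟨fun T => ⟨⟨T.1, fun c hc => entry_lt_of_content hd T.2.2 hc⟩, T.2.1,
    (Tab.cont_eq_res_iff hd _).2 T.2.2⟩, fun T => ⟨T.1.1, T.2.1,
    (Tab.cont_eq_res_iff hd _).1 T.2.2⟩, fun _ => rfl, fun _ => rfl⟩

/-- The Schur polynomial of `A` in `n` variables. -/
noncomputable def schurPoly (n : ℕ) (A : Diagram) : (Fin n → ℕ) →₀ ℤ :=
  ∑ T : Tab n A, Finsupp.single T.cont 1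

theorem schurPoly_apply (n : ℕ) (e : Fin n → ℕ) :
    schurPoly n A e = #{T : Tab n A | T.cont = e} := by
  classical
  rw [schurPoly, Finsupp.finsetSum_apply, card_filter, Nat.cast_sum]
  refine sum_congr rfl fun T _ => ?_
  rw [Finsupp.single_apply]
  split_ifs <;> simp

theorem coeff_schurOf (n : ℕ) (e : ℕ →₀ ℕ) (he : ∀ i, n ≤ i → e i = 0) :
    MvPowerSeries.coeff e (schurOf A) = schurPoly n A (res n e) := by
  classical
  rw [schurPoly_apply]
  have := card_tab_eq (A := A) n e he (fun _ => True)
  simp only [true_and] at this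
  rw [← this]; rfl

/-- The coefficient at `d + ρ` of the product of a Schur polynomial with the Vandermonde alternant
is a Littlewood–Richardson number. -/
theorem linearCombination_schurPoly {n : ℕ} (hs : IsSkew A a b) (d : ℕ →₀ ℕ)
    (hd : ∀ i, n ≤ i → d i = 0) (hd' : Antitone (res n d)) :
    Finsupp.linearCombination ℤ (fun e => altDelta (res n d + rho n) (e + rho n)) (schurPoly n A)
      = lrCount A d := by
  classical
  rw [lrCount, card_tab_eq n d hd (fun T => IsLattice T), ← sum_altDelta hs hd', schurPoly, map_sum]
  simp

theorem lrCount_straight {ν : ℕ →₀ ℕ} (hν : Antitone ν) (d : ℕ →₀ ℕ) :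
    lrCount (diagramOfF ν) d = if ν = d then 1 else 0 := by
  have hs := isSkew_diagramOfF hν
  have hc : content (superstandard (diagramOfF ν)) = ν := by
    ext v; exact superstandard_content hs v
  unfold lrCount
  split_ifs with h
  · subst h
    rw [Nat.card_eq_one_iff_exists]
    refine ⟨⟨_, superstandard_lattice hs, hc⟩, fun T => Subtype.ext ?_⟩
    exact (lattice_iff_superstandard hs _).1 T.2.1
  · rw [Nat.card_eq_zero]
    left
    refine ⟨fun T => h ?_⟩
    rw [← hc, ← T.2.2, (lattice_iff_superstandard hs _).1 T.2.1]

/-- The Littlewood–Richardson rule: in sufficiently many variables both sides are symmetric, and their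
products with the Vandermonde alternant agree at strictly decreasing exponents. -/
theorem lr_rule (hs : IsSkew A a b) (S : Finset (ℕ →₀ ℕ)) (hS : ∀ d ∈ S, Antitone d)
    (hsup : ∀ d, lrCount A d ≠ 0 → d ∈ S) :
    schurOf A = ∑ d ∈ S, (lrCount A d : ℤ) • schurOf (diagramOfF d) := by
  classical
  ext e
  -- enough variables for all the partitions involved
  obtain ⟨n, hn⟩ : ∃ n, ∀ d ∈ insert e S, ∀ i, n ≤ i → d i = 0 := by
    refine ⟨((insert e S).biUnion Finsupp.support).sup (· + 1), fun d hd i hi => ?_⟩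
    by_contra h
    have := le_sup (f := (· + 1))
      (mem_biUnion.2 ⟨d, hd, Finsupp.mem_support_iff.2 h⟩)
    omega
  have hne := hn e (mem_insert_self _ _)
  have hnS := fun d hd => hn d (mem_insert_of_mem hd)
  have key : schurPoly n A - ∑ d ∈ S, (lrCount A d : ℤ) • schurPoly n (diagramOfF d) = 0 := by
    refine eq_zero_of_altDelta _ ?_ ?_
    · intro u σ
      simp only [Finsupp.sub_apply, Finsupp.finsetSum_apply, Finsupp.smul_apply, schurPoly_apply,
        card_cont_perm hs]
      congr 1
      refine sum_congr rfl fun d hd => ?_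
      rw [card_cont_perm (isSkew_diagramOfF (hS d hd))]
    · intro d₀ hd₀
      obtain ⟨d, hd, rfl⟩ : ∃ d : ℕ →₀ ℕ, (∀ i, n ≤ i → d i = 0) ∧ res n d = d₀ := by
        refine ⟨Finsupp.onFinset (range n) (fun i => if h : i < n then d₀ ⟨i, h⟩ else 0) ?_, ?_, ?_⟩
        · intro i hi
          by_contra h
          rw [mem_range] at h
          simp [h] at hi
        · intro i hi
          simp [hi]
        · funext i
          simp [res]
      have hlc := fun g : (Fin n → ℕ) →₀ ℤ => Finsupp.linearCombination_apply (R := ℤ)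
        (v := fun e => altDelta (res n d + rho n) (e + rho n)) g
      simp only [smul_eq_mul] at hlc
      rw [← hlc, map_sub, map_sum, linearCombination_schurPoly hs d hd hd₀, sub_eq_zero]
      have h1 : ∀ ν ∈ S, Finsupp.linearCombination ℤ
          (fun e => altDelta (res n d + rho n) (e + rho n))
          ((lrCount A ν : ℤ) • schurPoly n (diagramOfF ν)) = if ν = d then (lrCount A d : ℤ) else 0 := by
        intro ν hν
        rw [map_smul, linearCombination_schurPoly (isSkew_diagramOfF (hS ν hν)) d hd hd₀,
          lrCount_straight (hS ν hν)]
        split_ifs with h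
        · simp [h]
        · simp
      rw [sum_congr rfl h1, sum_ite_eq']
      split_ifs with h
      · rfl
      · by_contra h2
        exact h (hsup d (by exact_mod_cast h2))
  have hk := DFunLike.congr_fun key (res n e)
  simp only [Finsupp.sub_apply, Finsupp.finsetSum_apply, Finsupp.smul_apply, Finsupp.zero_apply,
    sub_eq_zero] at hk
  rw [coeff_schurOf n e hne, hk, map_sum]
  refine sum_congr rfl fun d hd => ?_
  rw [map_zsmul, coeff_schurOf n e hne]

theorem antitone_of_lrCount (hs : IsSkew A a b) {d : ℕ →₀ ℕ} (h : lrCount A d ≠ 0) :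
    Antitone d := by
  obtain ⟨⟨T, h1, h2⟩⟩ := (Nat.card_ne_zero.1 h).1
  rw [← h2]
  exact ((hs.isLattice_iff T).1 h1).antitone

theorem finite_tab_content (d : ℕ →₀ ℕ) (P : SSYT A → Prop) :
    Finite {T : SSYT A // P T ∧ content T = d} := by
  have hd : ∀ i, d.support.sup (· + 1) ≤ i → d i = 0 := by
    intro i hi
    by_contra h
    have := le_sup (f := (· + 1)) (Finsupp.mem_support_iff.2 h)
    omega
  refine Finite.of_injective (β := Tab (d.support.sup (· + 1)) A)
    (fun T => ⟨T.1, fun c hc => entry_lt_of_content hd T.2.2 hc⟩) ?_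
  intro T T' h
  have h' := congrArg Subtype.val h
  exact Subtype.ext h'

theorem exists_of_lrCount {d : ℕ →₀ ℕ} (h : lrCount A d ≠ 0) :
    ∃ T : SSYT A, IsLattice T ∧ content T = d := by
  obtain ⟨⟨T, h⟩⟩ := (Nat.card_ne_zero.1 h).1
  exact ⟨T, h⟩

theorem lrCount_ne_zero {d : ℕ →₀ ℕ} {T : SSYT A} (h : IsLattice T) (h' : content T = d) :
    lrCount A d ≠ 0 :=
  Nat.card_ne_zero.2 ⟨⟨⟨T, h, h'⟩⟩, finite_tab_content d _⟩

theorem finite_lrCount (hs : IsSkew A a b) : {d | lrCount A d ≠ 0}.Finite := by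
  classical
  -- the entries of a lattice tableau are smaller than the number of cells
  refine (Set.finite_range fun T : Tab (#A) A => content T.1).subset ?_
  intro d hd
  obtain ⟨T, h1, h2⟩ := exists_of_lrCount hd
  have hanti := antitone_of_lrCount hs hd
  refine ⟨⟨T, fun c hc => ?_⟩, h2⟩
  have hpos : ∀ v ∈ range (T.entry c + 1), ∃ c' ∈ A, T.entry c' = v := by
    intro v hv
    have h3 : 0 < content T (T.entry c) := by
      rw [content_apply]; exact card_pos.2 ⟨c, mem_filter.2 ⟨hc, rfl⟩⟩
    have h4 : 0 < content T v := by
      have := hanti (Nat.lt_succ_iff.1 (mem_range.1 hv))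
      rw [← h2] at this
      omega
    rw [content_apply] at h4
    obtain ⟨c', h5⟩ := card_pos.1 h4
    exact ⟨c', (mem_filter.1 h5).1, (mem_filter.1 h5).2⟩
  have h5 : range (T.entry c + 1) ⊆ A.image T.entry := fun v hv => mem_image.2 (hpos v hv)
  have h6 := (card_le_card h5).trans card_image_le
  rw [card_range] at h6
  omega

end LR

/-! ### Fat staircases -/

section Staircase

/-- The number of cells in row `v` of the fat staircase `δ_α`. -/
def stairRow (α : List ℕ) (v : ℕ) : ℕ := (staircaseRows α).getD v 0

theorem stairRow_nil (v : ℕ) : stairRow [] v = 0 := by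
  simp [stairRow, staircaseRows]

theorem staircaseRows_concat (α : List ℕ) (x : ℕ) :
    staircaseRows (α ++ [x]) = List.replicate x (α.length + 1) ++ staircaseRows α := by
  unfold staircaseRows
  rw [List.length_append, List.length_singleton, List.range_succ, List.reverse_append,
    List.reverse_singleton, List.singleton_append, List.map_cons, List.flatten_cons]
  congr 1
  · congr 1
    simp
  · congr 1
    refine List.map_congr_left fun i hi => ?_
    have : i < α.length := by simpa using hi
    rw [List.getD_append _ _ _ _ this]

theorem stairRow_concat (α : List ℕ) (x v : ℕ) :
    stairRow (α ++ [x]) v = if v < x then α.length + 1 else stairRow α (v - x) := by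
  unfold stairRow
  rw [staircaseRows_concat]
  split_ifs with h
  · rw [List.getD_append _ _ _ _ (by simpa using h), List.getD_replicate _ h]
  · rw [List.getD_append_right _ _ _ _ (by simpa using h), List.length_replicate]

theorem stairRow_props (α : List ℕ) (hα : ∀ x ∈ α, 0 < x) :
    stairRow α 0 = α.length ∧
      ∀ v, stairRow α (v + 1) ≤ stairRow α v ∧ stairRow α v ≤ stairRow α (v + 1) + 1 := by
  induction α using List.reverseRecOn with
  | nil => simp [stairRow_nil]
  | append_singleton α x ih =>
    obtain ⟨ih0, ih⟩ := ih fun y hy => hα y (List.mem_append_left _ hy)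
    have hx : 0 < x := hα x (by simp)
    refine ⟨by rw [stairRow_concat, if_pos hx]; simp, fun v => ?_⟩
    rw [stairRow_concat, stairRow_concat]
    rcases lt_trichotomy (v + 1) x with h | h | h
    · rw [if_pos h, if_pos (by omega)]; omega
    · rw [if_neg (by omega), if_pos (by omega), h, Nat.sub_self, ih0]; omega
    · rw [if_neg (by omega), if_neg (by omega)]
      have := ih (v - x)
      rwa [show v + 1 - x = v - x + 1 by omega]

theorem stairRow_injective (α β : List ℕ) (hα : ∀ x ∈ α, 0 < x) (hβ : ∀ x ∈ β, 0 < x)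
    (h : stairRow α = stairRow β) : α = β := by
  have hlen : α.length = β.length := by
    rw [← (stairRow_props α hα).1, ← (stairRow_props β hβ).1, h]
  induction α using List.reverseRecOn generalizing β with
  | nil => exact (List.eq_nil_of_length_eq_zero hlen.symm).symm
  | append_singleton α x ih =>
    rcases List.eq_nil_or_concat β with rfl | ⟨β, y, rfl⟩
    · simp at hlen
    simp only [List.concat_eq_append] at *
    have hα' : ∀ z ∈ α, 0 < z := fun z hz => hα z (List.mem_append_left _ hz)
    have hβ' : ∀ z ∈ β, 0 < z := fun z hz => hβ z (List.mem_append_left _ hz)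
    have hlen' : α.length = β.length := by simpa using hlen
    have hα0 := (stairRow_props α hα').1
    have hβ0 := (stairRow_props β hβ').1
    have hxy : x = y := by
      have h1 := congrFun h x
      have h2 := congrFun h y
      simp only [stairRow_concat] at h1 h2
      rcases lt_trichotomy x y with hlt | heq | hlt
      · rw [if_neg (by omega), if_pos hlt, Nat.sub_self] at h1; omega
      · exact heq
      · rw [if_pos hlt, if_neg (by omega), Nat.sub_self] at h2; omega
    subst hxy
    congr 1
    refine ih β hα' hβ' ?_ hlen'
    funext v
    have := congrFun h (v + x)
    simpa [stairRow_concat] using this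

theorem mem_fatStaircase (α : List ℕ) (i j : ℕ) :
    (i, j) ∈ fatStaircase α ↔ j < stairRow α i := by
  simp only [fatStaircase, diagramOfRows, mem_biUnion, mem_image, mem_range, Prod.mk.injEq]
  constructor
  · rintro ⟨i, h1, j, h2, rfl, rfl⟩; exact h2
  · intro h
    refine ⟨i, ?_, j, h, rfl, rfl⟩
    by_contra hlt
    rw [stairRow, List.getD_eq_default _ _ (by omega)] at h
    omega

theorem rowContent_apply (A : Diagram) (v : ℕ) : rowContent A v = #{c ∈ A | c.1 = v} := by
  rw [rowContent, Finsupp.finsetSum_apply, card_filter]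
  refine sum_congr rfl fun c _ => ?_
  rw [Finsupp.single_apply]

theorem rowContent_fatStaircase (α : List ℕ) (v : ℕ) :
    rowContent (fatStaircase α) v = stairRow α v := by
  have : ({c ∈ fatStaircase α | c.1 = v} : Finset _) =
      (range (stairRow α v)).image (fun j => (v, j)) := by
    ext ⟨i, j⟩
    simp only [mem_filter, mem_image, mem_range, Prod.mk.injEq, mem_fatStaircase]
    constructor
    · rintro ⟨h1, rfl⟩; exact ⟨j, h1, rfl, rfl⟩
    · rintro ⟨j, h, rfl, rfl⟩; exact ⟨h, rfl⟩
  rw [rowContent_apply, this, card_image_of_injective _ (Prod.mk_right_injective v), card_range]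

end Staircase

/-! ### The rotation of a partition shape -/

section Rotate
variable {B : Diagram} {d : ℕ →₀ ℕ}

theorem exists_le_of_finsupp (d : ℕ →₀ ℕ) (j : ℕ) : ∃ m, d m ≤ j := by
  obtain ⟨m, hm⟩ := Infinite.exists_notMem_finset d.support
  exact ⟨m, by rw [Finsupp.notMem_support_iff.1 hm]; exact Nat.zero_le _⟩

/-- The conjugate of a partition: the length of its `j`-th column. -/
def conj (d : ℕ →₀ ℕ) (j : ℕ) : ℕ := Nat.find (exists_le_of_finsupp d j)

theorem lt_conj_iff (hd : Antitone d) (i j : ℕ) : i < conj d j ↔ j < d i := by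
  unfold conj
  rw [Nat.lt_find_iff]
  constructor
  · intro h; exact not_le.1 (h i le_rfl)
  · intro h m hm hle
    have := hd hm
    omega

variable (hd : Antitone d) (hB : ∀ i j, (i, j) ∈ B ↔ j < d i)
include hd hB

theorem lt_ht_iff (i : ℕ) : i < ht B ↔ 0 < d i := by
  constructor
  · intro h
    obtain ⟨⟨i', j'⟩, h1, h2⟩ := Finset.lt_sup_iff.1 h
    have := (hB _ _).1 h1
    have := hd (show i ≤ i' by simp only at h2; omega)
    omega
  · intro h
    exact lt_ht ((hB i 0).2 h)

theorem wd_eq : wd B = d 0 := by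
  refine le_antisymm (Finset.sup_le ?_) ?_
  · rintro ⟨i, j⟩ h
    have := (hB _ _).1 h
    have := hd (Nat.zero_le i)
    simp only; omega
  · by_contra hlt
    have := lt_wd ((hB 0 (wd B)).2 (by omega))
    omega

theorem mem_rotD (r c : ℕ) :
    (r, c) ∈ rotD B ↔ r < ht B ∧ c < d 0 ∧ d 0 - 1 - c < d (ht B - 1 - r) := by
  unfold rotD
  rw [wd_eq hd hB]
  simp only [mem_image, Prod.exists, Prod.mk.injEq]
  constructor
  · rintro ⟨i, j, h, rfl, rfl⟩
    have h1 := lt_ht h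
    have h2 := (hB _ _).1 h
    have h3 := hd (Nat.zero_le i)
    refine ⟨by omega, by omega, ?_⟩
    rw [show ht B - 1 - (ht B - 1 - i) = i by omega]
    omega
  · rintro ⟨h1, h2, h3⟩
    exact ⟨ht B - 1 - r, d 0 - 1 - c, (hB _ _).2 h3, by omega, by omega⟩

theorem mem_rotD' (r c : ℕ) :
    (r, c) ∈ rotD B ↔ r < ht B ∧ c < d 0 ∧ ht B - 1 - r < conj d (d 0 - 1 - c) := by
  rw [mem_rotD hd hB, lt_conj_iff hd]

theorem isSkew_rotD : IsSkew (rotD B)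
    (fun r => if r < ht B then d 0 - d (ht B - 1 - r) else 0)
    (fun r => if r < ht B then d 0 else 0) where
  anti_a := by
    intro r r' h
    have := hd (show ht B - 1 - r' ≤ ht B - 1 - r by omega)
    dsimp only
    split_ifs <;> omega
  anti_b := by
    intro r r' h
    dsimp only
    split_ifs <;> omega
  le r := by split_ifs <;> omega
  mem r c := by
    rw [mem_rotD hd hB]
    have := hd (Nat.zero_le (ht B - 1 - r))
    split_ifs <;> omega

theorem ht_rotD : ht (rotD B) = ht B := by
  refine le_antisymm (Finset.sup_le ?_) ?_
  · rintro ⟨r, c⟩ h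
    exact ((mem_rotD hd hB _ _).1 h).1
  · rcases Nat.eq_zero_or_pos (ht B) with h | h
    · omega
    · have h0 := (lt_ht_iff hd hB 0).1 h
      have := lt_ht ((mem_rotD hd hB (ht B - 1) (d 0 - 1)).2
        ⟨by omega, by omega, by
          have := (lt_ht_iff hd hB (ht B - 1 - (ht B - 1))).1 (by omega)
          omega⟩)
      omega

theorem conj_le_ht (j : ℕ) : conj d j ≤ ht B := by
  by_contra h
  have h1 := (lt_conj_iff hd (ht B) j).1 (by omega)
  have := (lt_ht_iff hd hB (ht B)).2 (by omega)
  omega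

/-- A lattice tableau on the rotation of a partition shape: each column is filled with
`0, 1, 2, …` from top to bottom. -/
def canonical : SSYT (rotD B) where
  entry x := if x ∈ rotD B then x.1 + conj d (d 0 - 1 - x.2) - ht B else 0
  rowWeak i j h h' := by
    rw [if_pos h, if_pos h']
    dsimp only
    have : conj d (d 0 - 1 - j) ≤ conj d (d 0 - 1 - (j + 1)) := by
      by_contra hlt
      have h1 := (lt_conj_iff hd _ _).1 (not_le.1 hlt)
      exact lt_irrefl _ ((lt_conj_iff hd _ _).2 (lt_of_le_of_lt (by omega) h1))
    omega
  colStrict i j h h' := by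
    rw [if_pos h, if_pos h']
    rw [mem_rotD' hd hB] at h
    simp only
    omega
  zero_outside x hx := if_neg hx

theorem canonical_entry {r c : ℕ} (h : (r, c) ∈ rotD B) :
    (canonical hd hB).entry (r, c) + ht B = r + conj d (d 0 - 1 - c) := by
  have h1 : (canonical hd hB).entry (r, c) = r + conj d (d 0 - 1 - c) - ht B := if_pos h
  rw [mem_rotD' hd hB] at h
  omega

theorem canonical_lattice : IsLattice (canonical hd hB) := by
  classical
  rw [(isSkew_rotD hd hB).isLattice_iff]
  intro J v
  refine card_le_card_of_injOn (fun c => (c.1 - 1, c.2)) ?_ ?_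
  · rintro ⟨r, c⟩ h
    simp only [coe_filter, Set.mem_ofPred_eq] at h ⊢
    obtain ⟨h1, h2, h3⟩ := h
    have h4 := canonical_entry hd hB h1
    have h5 := conj_le_ht hd hB (d 0 - 1 - c)
    have h6 : (r - 1, c) ∈ rotD B := by
      rw [mem_rotD' hd hB] at h1 ⊢
      omega
    have h7 := canonical_entry hd hB h6
    exact ⟨h6, h2, by omega⟩
  · rintro ⟨r, c⟩ h ⟨r', c'⟩ h' heq
    simp only [coe_filter, Set.mem_ofPred_eq] at h h'
    obtain ⟨h1, h2, h3⟩ := h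
    obtain ⟨h1', h2', h3'⟩ := h'
    have h4 := canonical_entry hd hB h1
    have h4' := canonical_entry hd hB h1'
    simp only [Prod.mk.injEq] at heq ⊢
    obtain ⟨-, rfl⟩ := heq
    omega

theorem canonical_content : content (canonical hd hB) = d := by
  ext v
  rw [content_apply]
  have : ({c ∈ rotD B | (canonical hd hB).entry c = v} : Finset _) =
      (range (d v)).image (fun j => (v + ht B - conj d j, d 0 - 1 - j)) := by
    ext ⟨r, c⟩
    simp only [mem_filter, mem_image, mem_range, Prod.mk.injEq]
    constructor
    · rintro ⟨h1, h2⟩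
      have h4 := canonical_entry hd hB h1
      rw [mem_rotD' hd hB] at h1
      refine ⟨d 0 - 1 - c, ?_, ?_, ?_⟩
      · rw [← lt_conj_iff hd]; omega
      · omega
      · omega
    · rintro ⟨j, h, rfl, rfl⟩
      have h5 := conj_le_ht hd hB j
      have h6 := hd (Nat.zero_le v)
      have h7 : d 0 - 1 - (d 0 - 1 - j) = j := by omega
      have h8 := (lt_conj_iff hd _ _).2 h
      have h1 : (v + ht B - conj d j, d 0 - 1 - j) ∈ rotD B := by
        rw [mem_rotD' hd hB, h7]
        omega
      have h4 := canonical_entry hd hB h1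
      rw [h7] at h4
      exact ⟨h1, by omega⟩
  rw [this, card_image_of_injOn, card_range]
  intro j hj j' hj' h
  simp only [coe_range, Set.mem_Iio, Prod.mk.injEq] at hj hj' h
  have := hd (Nat.zero_le v)
  omega

end Rotate

/-! ### Placing a skew diagram below another one -/

section Bottom
variable {E : Diagram} {aE bE : ℕ → ℕ}

theorem ht_pos_of_nonempty (h : E.Nonempty) : 0 < ht E := by
  obtain ⟨⟨i, j⟩, hc⟩ := h
  have := lt_ht hc
  omega

theorem bottom_mem (h : E.Nonempty) : (ht E - 1, blCol E) ∈ E := by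
  have hpos := ht_pos_of_nonempty h
  obtain ⟨⟨i, j⟩, hc, hi⟩ := Finset.lt_sup_iff.1 (show ht E - 1 < ht E by omega)
  have h1 := lt_ht hc
  have h2 : i = ht E - 1 := by simp only at hi; omega
  subst h2
  exact Nat.sInf_mem (s := {j | (ht E - 1, j) ∈ E}) ⟨j, hc⟩

theorem IsSkew.blCol_eq (hE : IsSkew E aE bE) (h : E.Nonempty) : blCol E = aE (ht E - 1) := by
  have h1 := bottom_mem h
  have h2 := (hE.mem _ _).1 h1
  refine le_antisymm (Nat.sInf_le ?_) h2.1
  exact (hE.mem _ _).2 ⟨le_rfl, by omega⟩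

theorem IsSkew.lastRowLen_eq (hE : IsSkew E aE bE) :
    lastRowLen E = bE (ht E - 1) - aE (ht E - 1) := by
  have : ({c ∈ E | c.1 = ht E - 1} : Finset _) =
      (Ico (aE (ht E - 1)) (bE (ht E - 1))).image (fun j => (ht E - 1, j)) := by
    ext ⟨i, j⟩
    simp only [mem_filter, mem_image, mem_Ico, Prod.mk.injEq, hE.mem]
    constructor
    · rintro ⟨h1, rfl⟩; exact ⟨j, h1, rfl, rfl⟩
    · rintro ⟨j, h, rfl, rfl⟩; exact ⟨h, rfl⟩
  rw [lastRowLen, this, card_image_of_injective _ (Prod.mk_right_injective _), Nat.card_Ico]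

/-- In a lattice tableau of skew shape there are at least as many zeros as there are cells in the
last row. -/
theorem IsSkew.lastRowLen_le (hE : IsSkew E aE bE) {T : SSYT E} (hT : IsLattice T) :
    lastRowLen E ≤ content T 0 := by
  classical
  rw [hE.isLattice_iff] at hT
  rw [hE.lastRowLen_eq]
  set r := ht E - 1
  -- going left along the last row, the number of copies of the current entry seen so far grows
  have key : ∀ m, m < bE r - aE r →
      m + 1 ≤ cnt T (bE r - 1 - m) (T.entry (r, bE r - 1 - m)) := by
    intro m
    induction m with
    | zero =>
      intro h
      exact card_pos.2 ⟨(r, bE r - 1 - 0), mem_filter.2 ⟨(hE.mem _ _).2 (by omega), le_rfl, rfl⟩⟩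
    | succ m ih =>
      intro h
      have ih := ih (by omega)
      set j := bE r - 1 - (m + 1) with hj
      have hj1 : bE r - 1 - m = j + 1 := by omega
      rw [hj1] at ih
      have hm : (r, j) ∈ E := (hE.mem _ _).2 (by omega)
      have hm' : (r, j + 1) ∈ E := (hE.mem _ _).2 (by omega)
      have h1 : cnt T (j + 1) (T.entry (r, j + 1)) ≤ cnt T (j + 1) (T.entry (r, j)) :=
        antitone_nat_of_succ_le (hT (j + 1)) (T.rowWeak r j hm hm')
      have h2 : cnt T (j + 1) (T.entry (r, j)) < cnt T j (T.entry (r, j)) := by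
        refine card_lt_card ⟨fun c => ?_, fun hsub => ?_⟩
        · simp only [mem_filter]
          rintro ⟨g1, g2, g3⟩
          exact ⟨g1, by omega, g3⟩
        · have := hsub (mem_filter.2 ⟨hm, le_rfl, rfl⟩)
          rw [mem_filter] at this
          simp only at this
          omega
      omega
  rcases Nat.eq_zero_or_pos (bE r - aE r) with h | h
  · omega
  have h1 := key (bE r - aE r - 1) (by omega)
  rw [← cnt_zero]
  have h2 := cnt_anti T (Nat.zero_le (bE r - 1 - (bE r - aE r - 1))) 0
  have h3 := antitone_nat_of_succ_le (hT (bE r - 1 - (bE r - aE r - 1)))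
    (Nat.zero_le (T.entry (r, bE r - 1 - (bE r - aE r - 1))))
  omega

end Bottom

/-- The diagram `F` placed immediately below `E`, where `E` is shifted to the right by `s`: row `0` and
column `0` of `F` become row `ht E` and the column of the bottom-left cell of the unshifted `E`. -/
noncomputable def below (E F : Diagram) (s : ℕ) : Diagram :=
  E.image (fun c => (c.1, c.2 + s)) ∪ F.image (fun c => (c.1 + ht E, c.2 + blCol E))

section Below
variable {E F : Diagram} {aE bE aF bF : ℕ → ℕ} {s : ℕ}

theorem mem_below (i j : ℕ) : (i, j) ∈ below E F s ↔
    (s ≤ j ∧ (i, j - s) ∈ E) ∨ (ht E ≤ i ∧ blCol E ≤ j ∧ (i - ht E, j - blCol E) ∈ F) := by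
  simp only [below, mem_union, mem_image, Prod.exists, Prod.mk.injEq]
  constructor
  · rintro (⟨x, y, h, rfl, rfl⟩ | ⟨x, y, h, rfl, rfl⟩)
    · left; simpa using h
    · right; simpa using h
  · rintro (⟨h1, h2⟩ | ⟨h1, h2, h3⟩)
    · exact Or.inl ⟨_, _, h2, rfl, by omega⟩
    · exact Or.inr ⟨_, _, h3, by omega, by omega⟩

theorem upper_mem {i j : ℕ} (h : (i, j) ∈ E) : (i, j + s) ∈ below E F s :=
  (mem_below _ _).2 (Or.inl (by simpa using h))

theorem lower_mem {i j : ℕ} (h : (i, j) ∈ F) : (i + ht E, j + blCol E) ∈ below E F s :=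
  (mem_below _ _).2 (Or.inr (by simpa using h))

theorem card_filter_below (p : ℕ × ℕ → Prop) [DecidablePred p] :
    #{c ∈ below E F s | p c} = #{c ∈ E | p (c.1, c.2 + s)} +
      #{c ∈ F | p (c.1 + ht E, c.2 + blCol E)} := by
  simp only [card_filter, below]
  rw [sum_union, sum_image, sum_image]
  · rintro ⟨i, j⟩ - ⟨i', j'⟩ - h
    simpa using h
  · rintro ⟨i, j⟩ - ⟨i', j'⟩ - h
    simpa using h
  · rw [disjoint_left]
    intro c h h'
    simp only [mem_image, Prod.exists] at h h'
    obtain ⟨x, y, h1, rfl⟩ := h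
    obtain ⟨x', y', h1', h2⟩ := h'
    simp only [Prod.mk.injEq] at h2
    have := lt_ht h1
    omega

theorem isSkew_below (hE : IsSkew E aE bE) (hF : IsSkew F aF bF) (ha : aF 0 ≤ s)
    (hb : bF 0 ≤ s + lastRowLen E) : ∃ a b, IsSkew (below E F s) a b := by
  have key : ∀ i, i < ht E → blCol E ≤ aE i ∧ bF 0 + blCol E ≤ bE i + s := by
    intro i hi
    have hne : E.Nonempty := by
      rw [nonempty_iff_ne_empty]
      rintro rfl
      simp [ht] at hi
    have h1 := hE.anti_a (show i ≤ ht E - 1 by omega)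
    have h2 := hE.anti_b (show i ≤ ht E - 1 by omega)
    have h3 := hE.le (ht E - 1)
    have h4 := hE.lastRowLen_eq
    have h5 := hE.blCol_eq hne
    omega
  refine ⟨fun i => if i < ht E then aE i + s else aF (i - ht E) + blCol E,
    fun i => if i < ht E then bE i + s else bF (i - ht E) + blCol E, ?_, ?_, ?_, ?_⟩
  · intro i i' h
    have := hE.anti_a h
    have := hF.anti_a (show i - ht E ≤ i' - ht E by omega)
    have := hF.anti_a (Nat.zero_le (i' - ht E))
    have := key i
    dsimp only
    split_ifs <;> omega
  · intro i i' h
    have := hE.anti_b h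
    have := hF.anti_b (show i - ht E ≤ i' - ht E by omega)
    have := hF.anti_b (Nat.zero_le (i' - ht E))
    have := key i
    dsimp only
    split_ifs <;> omega
  · intro i
    have := hE.le i
    have := hF.le (i - ht E)
    split_ifs <;> omega
  · intro i j
    rw [mem_below]
    have h1 : (i, j - s) ∈ E → i < ht E := lt_ht
    rw [hE.mem] at h1 ⊢
    rw [hF.mem]
    split_ifs <;> omega

/-- The part of a tableau lying in the upper diagram. -/
noncomputable def upper (T : SSYT (below E F s)) : SSYT E where
  entry c := if c ∈ E then T.entry (c.1, c.2 + s) else 0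
  rowWeak i j h h' := by
    rw [if_pos h, if_pos h']
    have h1 := upper_mem (F := F) (s := s) h'
    simp only [Nat.add_right_comm j 1 s] at h1 ⊢
    exact T.rowWeak _ _ (upper_mem h) h1
  colStrict i j h h' := by
    rw [if_pos h, if_pos h']
    exact T.colStrict _ _ (upper_mem h) (upper_mem h')
  zero_outside c h := if_neg h

/-- The part of a tableau lying in the lower diagram. -/
noncomputable def lower (T : SSYT (below E F s)) : SSYT F where
  entry c := if c ∈ F then T.entry (c.1 + ht E, c.2 + blCol E) else 0
  rowWeak i j h h' := by
    rw [if_pos h, if_pos h']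
    have h1 := lower_mem (E := E) (s := s) h'
    simp only [Nat.add_right_comm j 1 (blCol E)] at h1 ⊢
    exact T.rowWeak _ _ (lower_mem h) h1
  colStrict i j h h' := by
    rw [if_pos h, if_pos h']
    have h1 := lower_mem (E := E) (s := s) h'
    simp only [Nat.add_right_comm i 1 (ht E)] at h1 ⊢
    exact T.colStrict _ _ (lower_mem h) h1
  zero_outside c h := if_neg h

theorem upper_entry (T : SSYT (below E F s)) : ∀ c ∈ E,
    T.entry (c.1, c.2 + s) = (upper T).entry c := fun _ h => (if_pos h).symm

theorem lower_entry (T : SSYT (below E F s)) : ∀ c ∈ F,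
    T.entry (c.1 + ht E, c.2 + blCol E) = (lower T).entry c := fun _ h => (if_pos h).symm

theorem below_ext {T T' : SSYT (below E F s)} (h1 : upper T = upper T') (h2 : lower T = lower T') :
    T = T' := by
  refine SSYT.ext' ?_
  rintro ⟨i, j⟩ h
  rcases (mem_below _ _).1 h with ⟨g1, g2⟩ | ⟨g1, g2, g3⟩
  · have e1 := upper_entry T _ g2
    have e2 := upper_entry T' _ g2
    simp only [Nat.sub_add_cancel g1] at e1 e2
    rw [e1, e2, h1]
  · have e1 := lower_entry T _ g3
    have e2 := lower_entry T' _ g3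
    simp only [Nat.sub_add_cancel g1, Nat.sub_add_cancel g2] at e1 e2
    rw [e1, e2, h2]

/-- Tableaux of the shapes `E` and `F` fit together to a tableau of shape `below E F s`: the
columns increase strictly across the interface. -/
def Compat (s : ℕ) (TE : SSYT E) (TF : SSYT F) : Prop :=
  ∀ j j', (ht E - 1, j) ∈ E → (0, j') ∈ F → j + s = j' + blCol E →
    TE.entry (ht E - 1, j) < TF.entry (0, j')

theorem glue_aux (TE : SSYT E) (TF : SSYT F) :
    ∃ f : ℕ × ℕ → ℕ, (∀ i j, (i, j) ∈ E → f (i, j + s) = TE.entry (i, j)) ∧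
      (∀ i j, (i, j) ∈ F → f (i + ht E, j + blCol E) = TF.entry (i, j)) ∧
      ∀ c, c ∉ below E F s → f c = 0 := by
  classical
  refine ⟨fun c => if c ∈ below E F s then if c.1 < ht E then TE.entry (c.1, c.2 - s)
    else TF.entry (c.1 - ht E, c.2 - blCol E) else 0, ?_, ?_, ?_⟩
  · intro i j h
    have h1 := lt_ht h
    simp [upper_mem h, h1]
  · intro i j h
    simp [lower_mem h]
  · intro c hc
    simp [hc]

theorem exists_glue {TE : SSYT E} {TF : SSYT F} (hc : Compat s TE TF) :
    ∃ T : SSYT (below E F s), upper T = TE ∧ lower T = TF := by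
  obtain ⟨f, hf1, hf2, hf3⟩ := glue_aux (s := s) TE TF
  refine ⟨⟨f, ?_, ?_, hf3⟩, ?_, ?_⟩
  · intro i j h h'
    rw [mem_below] at h h'
    rcases h with ⟨h1, h2⟩ | ⟨h1, h2, h3⟩
    · obtain ⟨x, rfl⟩ := Nat.exists_eq_add_of_le' h1
      rw [Nat.add_sub_cancel] at h2
      rcases h' with ⟨h1', h2'⟩ | ⟨h1', -⟩
      · rw [Nat.add_right_comm, Nat.add_sub_cancel] at h2'
        rw [hf1 _ _ h2, Nat.add_right_comm, hf1 _ _ h2']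
        exact TE.rowWeak _ _ h2 h2'
      · have := lt_ht h2; omega
    · obtain ⟨x, rfl⟩ := Nat.exists_eq_add_of_le' h2
      obtain ⟨y, rfl⟩ := Nat.exists_eq_add_of_le' h1
      rw [Nat.add_sub_cancel, Nat.add_sub_cancel] at h3
      rcases h' with ⟨h1', h2'⟩ | ⟨h1', h2', h3'⟩
      · have := lt_ht h2'; omega
      · rw [Nat.add_right_comm, Nat.add_sub_cancel, Nat.add_sub_cancel] at h3'
        rw [hf2 _ _ h3, Nat.add_right_comm, hf2 _ _ h3']
        exact TF.rowWeak _ _ h3 h3'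
  · intro i j h h'
    rw [mem_below] at h h'
    rcases h with ⟨h1, h2⟩ | ⟨h1, h2, h3⟩
    · obtain ⟨x, rfl⟩ := Nat.exists_eq_add_of_le' h1
      rw [Nat.add_sub_cancel] at h2
      rcases h' with ⟨h1', h2'⟩ | ⟨h1', h2', h3'⟩
      · rw [Nat.add_sub_cancel] at h2'
        rw [hf1 _ _ h2, hf1 _ _ h2']
        exact TE.colStrict _ _ h2 h2'
      · have hi := lt_ht h2
        have e1 : i + 1 = ht E := by omega
        rw [e1, Nat.sub_self] at h3'
        have e2 := hf2 _ _ h3'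
        rw [zero_add, Nat.sub_add_cancel h2'] at e2
        obtain rfl : i = ht E - 1 := by omega
        rw [hf1 _ _ h2, e1, e2]
        exact hc _ _ h2 h3' (by omega)
    · obtain ⟨x, rfl⟩ := Nat.exists_eq_add_of_le' h2
      obtain ⟨y, rfl⟩ := Nat.exists_eq_add_of_le' h1
      rw [Nat.add_sub_cancel, Nat.add_sub_cancel] at h3
      rcases h' with ⟨h1', h2'⟩ | ⟨h1', h2', h3'⟩
      · have := lt_ht h2'; omega
      · rw [Nat.add_right_comm, Nat.add_sub_cancel, Nat.add_sub_cancel] at h3'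
        rw [hf2 _ _ h3, Nat.add_right_comm, hf2 _ _ h3']
        exact TF.colStrict _ _ h3 h3'
  · refine SSYT.ext' fun c h => ?_
    rw [← upper_entry _ c h]
    exact hf1 _ _ h
  · refine SSYT.ext' fun c h => ?_
    rw [← lower_entry _ c h]
    exact hf2 _ _ h

theorem content_below (T : SSYT (below E F s)) :
    content T = content (upper T) + content (lower T) := by
  ext v
  rw [Finsupp.add_apply, content_apply, content_apply, content_apply, card_filter_below]
  congr 2
  · exact filter_congr fun c h => by rw [upper_entry T c h]
  · exact filter_congr fun c h => by rw [lower_entry T c h]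

/-- The reading word of `T`, preceded by a word of content `ν`, is lattice (as far as its prefixes
ending in a letter of `T` are concerned). -/
def LatticeFrom (ν : ℕ →₀ ℕ) (T : SSYT F) : Prop :=
  ∀ c ∈ F, ∀ v : ℕ, ν (v + 1) + #{c' ∈ F | ReadBefore c' c ∧ T.entry c' = v + 1} ≤
    ν v + #{c' ∈ F | ReadBefore c' c ∧ T.entry c' = v}

theorem card_read_upper (T : SSYT (below E F s)) {i j : ℕ} (h : (i, j) ∈ E) (v : ℕ) :
    #{c' ∈ below E F s | ReadBefore c' (i, j + s) ∧ T.entry c' = v} =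
      #{c' ∈ E | ReadBefore c' (i, j) ∧ (upper T).entry c' = v} := by
  have hi := lt_ht h
  rw [card_filter_below, Nat.add_eq_left.2]
  · refine congrArg card (filter_congr fun c hc => ?_)
    rw [upper_entry T c hc]
    simp only [ReadBefore, Nat.add_le_add_iff_right]
  · rw [card_eq_zero, filter_eq_empty_iff]
    rintro ⟨i', j'⟩ - ⟨h1, -⟩
    simp only [ReadBefore] at h1
    omega

theorem card_read_lower (T : SSYT (below E F s)) (i j v : ℕ) :
    #{c' ∈ below E F s | ReadBefore c' (i + ht E, j + blCol E) ∧ T.entry c' = v} =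
      content (upper T) v + #{c' ∈ F | ReadBefore c' (i, j) ∧ (lower T).entry c' = v} := by
  rw [card_filter_below, content_apply]
  congr 2
  · refine filter_congr fun c hc => ?_
    have := lt_ht (show (c.1, c.2) ∈ E from hc)
    rw [upper_entry T c hc]
    simp only [ReadBefore, and_iff_right_iff_imp]
    intro _
    left; omega
  · refine filter_congr fun c hc => ?_
    rw [lower_entry T c hc]
    simp only [ReadBefore, Nat.add_le_add_iff_right, Nat.add_lt_add_iff_right,
      Nat.add_right_cancel_iff]

/-- All of the upper part is read before the lower part. -/
theorem isLattice_below (T : SSYT (below E F s)) :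
    IsLattice T ↔ IsLattice (upper T) ∧ LatticeFrom (content (upper T)) (lower T) := by
  constructor
  · intro h
    constructor
    · rintro ⟨i, j⟩ hc v
      have := h _ (upper_mem hc) v
      rwa [card_read_upper T hc, card_read_upper T hc] at this
    · rintro ⟨i, j⟩ hc v
      have := h _ (lower_mem hc) v
      rwa [card_read_lower, card_read_lower] at this
  · rintro ⟨h1, h2⟩ ⟨i, j⟩ hc v
    rcases (mem_below _ _).1 hc with ⟨g1, g2⟩ | ⟨g1, g2, g3⟩
    · obtain ⟨x, rfl⟩ := Nat.exists_eq_add_of_le' g1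
      rw [Nat.add_sub_cancel] at g2
      rw [card_read_upper T g2, card_read_upper T g2]
      exact h1 _ g2 v
    · obtain ⟨x, rfl⟩ := Nat.exists_eq_add_of_le' g2
      obtain ⟨y, rfl⟩ := Nat.exists_eq_add_of_le' g1
      rw [Nat.add_sub_cancel, Nat.add_sub_cancel] at g3
      rw [card_read_lower, card_read_lower]
      exact h2 _ g3 v

end Below

/-! ### The interface with a fat staircase -/

section Interface
variable {F : Diagram} {aF bF : ℕ → ℕ} {ν : ℕ →₀ ℕ}

/-- Up to a cell of the first row with entry `v + 1` no `v` has been read in `T`, so all copies of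
`v + 1` read so far have to be accounted for by `ν v - ν (v + 1)`. -/
theorem LatticeFrom.first_row (hF : IsSkew F aF bF) {T : SSYT F} (hT : LatticeFrom ν T) {j v : ℕ}
    (hj : (0, j) ∈ F) (hv : T.entry (0, j) = v + 1) :
    ν (v + 1) + #{c' ∈ F | ReadBefore c' (0, j) ∧ T.entry c' = v + 1} ≤ ν v := by
  have h1 := hT _ hj v
  have h2 : #{c' ∈ F | ReadBefore c' (0, j) ∧ T.entry c' = v} = 0 := by
    rw [card_eq_zero, filter_eq_empty_iff]
    rintro ⟨i', j'⟩ h ⟨h4, h5⟩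
    simp only [ReadBefore] at h4
    obtain ⟨rfl, h6⟩ : i' = 0 ∧ j ≤ j' := by omega
    have := hF.row_le T hj h h6
    omega
  omega

/-- Let `T` continue a lattice word whose content `ν` is a fat staircase. From column `s` on, the
entries `x` of the first row of `T` increase strictly and `ν x` decreases with them. In column
`s + p` this gives `ν x ≤ ν 0 - 1 - p`, which says that `x` exceeds the entry of the canonical
filling of the rotated fat staircase above it. -/
theorem LatticeFrom.interface (hF : IsSkew F aF bF) {T : SSYT F} (hT : LatticeFrom ν T)
    (hν : Antitone ν) (hν' : ∀ v, ν v ≤ ν (v + 1) + 1) {s : ℕ} (hs : aF 0 ≤ s)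
    (h0 : (0, s) ∈ F → 0 < T.entry (0, s)) (p : ℕ) (hp : (0, s + p) ∈ F) :
    0 < T.entry (0, s + p) ∧ ν (T.entry (0, s + p)) + p + 1 ≤ ν 0 := by
  have hmem : ∀ q, q ≤ p → (0, s + q) ∈ F := by
    intro q hq
    rw [hF.mem] at *
    omega
  have hpos : ∀ q, q ≤ p → 0 < T.entry (0, s + q) := fun q hq =>
    (h0 (hmem 0 (Nat.zero_le _))).trans_le
      (hF.row_le T (hmem 0 (Nat.zero_le _)) (hmem q hq) (by omega))
  refine ⟨hpos p le_rfl, ?_⟩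
  have key : ∀ q, q ≤ p → ν (T.entry (0, s + q)) + q + 1 ≤ ν 0 := by
    intro q
    induction q with
    | zero =>
      intro hq
      obtain ⟨v, hv⟩ : ∃ v, T.entry (0, s + 0) = v + 1 :=
        Nat.exists_eq_add_of_le' (hpos 0 hq)
      have h1 := hT.first_row hF (hmem 0 hq) hv
      have h2 : 0 < #{c' ∈ F | ReadBefore c' (0, s + 0) ∧ T.entry c' = v + 1} :=
        card_pos.2 ⟨_, mem_filter.2 ⟨hmem 0 hq, Or.inr ⟨rfl, le_rfl⟩, hv⟩⟩
      have h3 := hν (Nat.zero_le v)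
      rw [hv]; omega
    | succ q ih =>
      intro hq
      have ih := ih (by omega)
      have hle := hF.row_le T (hmem q (by omega)) (hmem (q + 1) hq) (by omega)
      rcases hle.lt_or_eq with hlt | heq
      · obtain ⟨v, hv⟩ : ∃ v, T.entry (0, s + (q + 1)) = v + 1 :=
          Nat.exists_eq_add_of_le' (hpos _ hq)
        have h1 := hT.first_row hF (hmem _ hq) hv
        have h2 : 0 < #{c' ∈ F | ReadBefore c' (0, s + (q + 1)) ∧ T.entry c' = v + 1} :=
          card_pos.2 ⟨_, mem_filter.2 ⟨hmem _ hq, Or.inr ⟨rfl, le_rfl⟩, hv⟩⟩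
        have h3 := hν (show T.entry (0, s + q) ≤ v by omega)
        rw [hv]; omega
      · -- a repeated entry would need a step of height two in `ν`
        obtain ⟨v, hv⟩ : ∃ v, T.entry (0, s + q) = v + 1 :=
          Nat.exists_eq_add_of_le' (hpos _ (by omega))
        have h1 := hT.first_row hF (hmem q (by omega)) hv
        have h2 : 1 < #{c' ∈ F | ReadBefore c' (0, s + q) ∧ T.entry c' = v + 1} :=
          one_lt_card.2 ⟨_, mem_filter.2 ⟨hmem q (by omega), Or.inr ⟨rfl, le_rfl⟩, hv⟩,
            _, mem_filter.2 ⟨hmem (q + 1) hq, Or.inr ⟨rfl, by simp only; omega⟩, heq ▸ hv⟩,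
            by simp⟩
        have := hν' v
        omega
  exact key p le_rfl

/-- The tableaux of shape `F` that can serve as lower part of a lattice tableau of content `d`
whose upper part has content `ν`. The condition on the cell `(0, s)` holds because there is a cell
above it, in the bottom-left corner of the upper part. -/
def Lower (F : Diagram) (s : ℕ) (ν d : ℕ →₀ ℕ) : Type :=
  {T : SSYT F // (LatticeFrom ν T ∧ ((0, s) ∈ F → 0 < T.entry (0, s))) ∧ ν + content T = d}

instance (F : Diagram) (s : ℕ) (ν d : ℕ →₀ ℕ) : Finite (Lower F s ν d) := by
  have := finite_tab_content (A := F) (d - ν) (fun _ => True)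
  refine Finite.of_injective (β := {T : SSYT F // True ∧ content T = d - ν})
    (fun T => ⟨T.1, trivial, by have := T.2.2; exact (add_tsub_cancel_left ν _).symm.trans (by rw [this])⟩) ?_
  intro T T' h
  have h' := congrArg Subtype.val h
  exact Subtype.ext h'

instance (A : Diagram) (d : ℕ →₀ ℕ) : Finite {T : SSYT A // IsLattice T ∧ content T = d} :=
  finite_tab_content d _

/-- Cutting lattice tableaux along the interface. -/
theorem lrCount_below_le {E : Diagram} {aE bE : ℕ → ℕ} {s : ℕ} (hE : IsSkew E aE bE)
    (hF : IsSkew F aF bF) (hb : bF 0 ≤ s + lastRowLen E) (V : Finset (ℕ →₀ ℕ))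
    (hV : ∀ ν, lrCount E ν ≠ 0 → ν ∈ V) (d : ℕ →₀ ℕ) :
    lrCount (below E F s) d ≤ ∑ ν ∈ V, lrCount E ν * Nat.card (Lower F s ν d) := by
  classical
  have h0 : ∀ T : SSYT (below E F s), (0, s) ∈ F → 0 < (lower T).entry (0, s) := by
    intro T h
    have hne : E.Nonempty := by
      rw [nonempty_iff_ne_empty]
      rintro rfl
      have := (hF.mem _ _).1 h
      simp only [lastRowLen, filter_empty, card_empty] at hb
      omega
    have hpos := ht_pos_of_nonempty hne
    have h1 := lower_mem (E := E) (s := s) h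
    have h2 := upper_mem (F := F) (s := s) (bottom_mem hne)
    have e1 := lower_entry T _ h
    simp only at e1
    rw [← e1]
    rw [zero_add, add_comm s] at h1 ⊢
    rw [show ht E = ht E - 1 + 1 by omega] at h1 ⊢
    exact Nat.zero_lt_of_lt (T.colStrict _ _ (by simpa using h2) h1)
  let X := (ν : V) × ({T : SSYT E // IsLattice T ∧ content T = ν.1} × Lower F s ν d)
  have hX : Nat.card X = ∑ ν ∈ V, lrCount E ν * Nat.card (Lower F s ν d) := by
    rw [Nat.card_sigma, ← sum_coe_sort V]
    refine sum_congr rfl fun ν _ => ?_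
    rw [Nat.card_prod]; rfl
  rw [← hX]
  refine Nat.card_le_card_of_injective
    (fun T => (⟨⟨content (upper T.1),
      hV _ (lrCount_ne_zero ((isLattice_below T.1).1 T.2.1).1 rfl)⟩,
      ⟨upper T.1, ((isLattice_below T.1).1 T.2.1).1, rfl⟩,
      ⟨lower T.1, ⟨((isLattice_below T.1).1 T.2.1).2, h0 T.1⟩,
        by rw [← content_below, T.2.2]⟩⟩ : X)) ?_
  intro T T' h
  have e1 := congrArg (fun x : X => x.2.1.1) h
  have e2 := congrArg (fun x : X => x.2.2.1) h
  exact Subtype.ext (below_ext e1 e2)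

/-- Every admissible lower part can be glued below the canonical filling of the rotated fat
staircase. -/
theorem card_lower_le {B : Diagram} (hν : Antitone ν) (hB : ∀ i j, (i, j) ∈ B ↔ j < ν i)
    (hν' : ∀ v, ν v ≤ ν (v + 1) + 1) (hF : IsSkew F aF bF) {s : ℕ} (hs : aF 0 ≤ s)
    (d : ℕ →₀ ℕ) : Nat.card (Lower F s ν d) ≤ lrCount (below (rotD B) F s) d := by
  have hbl : blCol (rotD B) = 0 := by
    rcases (rotD B).eq_empty_or_nonempty with h | h
    · simp [h, blCol]
    · rw [(isSkew_rotD hν hB).blCol_eq h, ht_rotD hν hB]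
      have hpos := ht_pos_of_nonempty h
      rw [ht_rotD hν hB] at hpos
      rw [if_pos (by omega), Nat.sub_self, Nat.sub_self]
  have hglue : ∀ T : Lower F s ν d, ∃ T' : SSYT (below (rotD B) F s),
      upper T' = canonical hν hB ∧ lower T' = T.1 := by
    intro T
    refine exists_glue ?_
    intro j j' h h' hjj
    rw [hbl] at hjj
    obtain rfl : j' = s + j := by omega
    obtain ⟨h1, h2⟩ := T.2.1.1.interface hF hν hν' hs T.2.1.2 j h'
    have h3 := canonical_entry hν hB h
    rw [mem_rotD' hν hB] at h
    rw [ht_rotD hν hB] at *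
    have h4 : ¬ T.1.entry (0, s + j) < conj ν (ν 0 - 1 - j) := by
      rw [lt_conj_iff hν]; omega
    omega
  choose g hg1 hg2 using hglue
  refine Nat.card_le_card_of_injective
    (fun T => (⟨g T, (isLattice_below _).2 ⟨?_, ?_⟩, ?_⟩ :
      {T : SSYT (below (rotD B) F s) // IsLattice T ∧ content T = d})) ?_
  · rw [hg1]; exact canonical_lattice hν hB
  · rw [hg1, hg2, canonical_content]; exact T.2.1.1
  · rw [content_below, hg1, hg2, canonical_content]; exact T.2.2
  · intro T T' h
    have e1 := congrArg (fun x => lower x.1) h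
    simp only [hg2] at e1
    exact Subtype.ext e1

theorem lastRowLen_rotD {B : Diagram} (hν : Antitone ν) (hB : ∀ i j, (i, j) ∈ B ↔ j < ν i) :
    lastRowLen (rotD B) = ν 0 := by
  rw [(isSkew_rotD hν hB).lastRowLen_eq, ht_rotD hν hB]
  have h := lt_ht_iff hν hB 0
  simp only [Nat.sub_self]
  split_ifs <;> omega

end Interface

/-! ### Sliding the upper diagram -/

section Slide

/-- Tableaux can be pulled back along a bijection of diagrams that maps horizontally or vertically
adjacent cells to such cells, in the same direction. -/
theorem card_tab_le_of_bij {A B : Diagram} (f g : ℕ × ℕ → ℕ × ℕ)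
    (hf : ∀ c ∈ A, f c ∈ B) (hg : ∀ c ∈ B, g c ∈ A)
    (hgf : ∀ c ∈ A, g (f c) = c) (hfg : ∀ c ∈ B, f (g c) = c)
    (hrow : ∀ i j, (i, j) ∈ A → (i, j + 1) ∈ A → f (i, j + 1) = ((f (i, j)).1, (f (i, j)).2 + 1))
    (hcol : ∀ i j, (i, j) ∈ A → (i + 1, j) ∈ A → f (i + 1, j) = ((f (i, j)).1 + 1, (f (i, j)).2))
    (d : ℕ →₀ ℕ) :
    Nat.card {T : SSYT B // content T = d} ≤ Nat.card {T : SSYT A // content T = d} := by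
  classical
  have : Finite {T : SSYT A // content T = d} := by
    have := finite_tab_content (A := A) d (fun _ => True)
    simpa using this
  let F : SSYT B → SSYT A := fun T =>
    { entry := fun c => if c ∈ A then T.entry (f c) else 0
      rowWeak := fun i j h h' => by
        rw [if_pos h, if_pos h', hrow i j h h']
        have h1 := hf _ h'
        rw [hrow i j h h'] at h1
        exact T.rowWeak _ _ (hf _ h) h1
      colStrict := fun i j h h' => by
        rw [if_pos h, if_pos h', hcol i j h h']
        have h1 := hf _ h'
        rw [hcol i j h h'] at h1
        exact T.colStrict _ _ (hf _ h) h1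
      zero_outside := fun c h => if_neg h }
  have hF : ∀ T, ∀ c ∈ A, (F T).entry c = T.entry (f c) := fun T c h => if_pos h
  refine Nat.card_le_card_of_injective (fun T => ⟨F T.1, ?_⟩) ?_
  · refine Eq.trans ?_ T.2
    unfold content
    refine sum_nbij' f g hf hg hgf hfg fun c hc => ?_
    rw [hF _ _ hc]
  · intro T T' h
    have h1 : F T.1 = F T'.1 := congrArg Subtype.val h
    refine Subtype.ext (SSYT.ext' fun c hc => ?_)
    have := congrArg (fun x : SSYT A => x.entry (g c)) h1
    simp only [hF _ _ (hg c hc), hfg c hc] at this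
    exact this

/-- When the first row of `F` is empty, the two parts do not interact, so that the amount of the
shift is irrelevant. -/
theorem schurOf_below_slide {F : Diagram} (hF : ∀ j, (0, j) ∉ F) (E : Diagram) (s s' : ℕ) :
    schurOf (below E F s) = schurOf (below E F s') := by
  have key : ∀ (s s' : ℕ) (d : ℕ →₀ ℕ), Nat.card {T : SSYT (below E F s') // content T = d} ≤
      Nat.card {T : SSYT (below E F s) // content T = d} := by
    intro s s' d
    have hE : ∀ {i j : ℕ}, (i, j) ∈ E → i < ht E := lt_ht
    have hz : ∀ {i j : ℕ}, ht E ≤ i → (i - ht E, j) ∈ F → ht E < i := by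
      intro i j h h'
      rcases h.lt_or_eq with h1 | h1
      · exact h1
      · rw [← h1, Nat.sub_self] at h'
        exact absurd h' (hF _)
    have hm : ∀ s s' : ℕ, ∀ c ∈ below E F s,
        (if c.1 < ht E then (c.1, c.2 - s + s') else c) ∈ below E F s' := by
      rintro s s' ⟨i, j⟩ h
      rcases (mem_below _ _).1 h with ⟨h1, h2⟩ | ⟨h1, h2, h3⟩
      · simp only [hE h2, if_true]
        exact upper_mem h2
      · rw [if_neg (by simp only; omega)]
        exact (mem_below _ _).2 (Or.inr ⟨h1, h2, h3⟩)
    have hinv : ∀ s s' : ℕ, ∀ c ∈ below E F s,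
        (fun c : ℕ × ℕ => if c.1 < ht E then (c.1, c.2 - s' + s) else c)
          (if c.1 < ht E then (c.1, c.2 - s + s') else c) = c := by
      rintro s s' ⟨i, j⟩ h
      rcases (mem_below _ _).1 h with ⟨h1, h2⟩ | ⟨h1, h2, h3⟩
      · simp [hE h2]; omega
      · have : ¬ i < ht E := by omega
        simp [this]
    refine card_tab_le_of_bij (fun c => if c.1 < ht E then (c.1, c.2 - s + s') else c)
      (fun c => if c.1 < ht E then (c.1, c.2 - s' + s) else c) (hm s s') (hm s' s)
      (hinv s s') (hinv s' s) ?_ ?_ d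
    · intro i j h h'
      by_cases hi : i < ht E
      · rcases (mem_below _ _).1 h with ⟨h1, h2⟩ | ⟨h1, h2, h3⟩
        · simp only [hi, if_true, Prod.mk.injEq, true_and]; omega
        · omega
      · simp [hi]
    · intro i j h h'
      rcases (mem_below _ _).1 h' with ⟨h1, h2⟩ | ⟨h1, h2, h3⟩
      · have := hE h2
        have hi : i < ht E := by omega
        simp [hi, this]
      · have h4 := hz h1 h3
        have hi : ¬ i < ht E := by omega
        have hi' : ¬ i + 1 < ht E := by omega
        simp [hi, hi']
  ext d
  show ((Nat.card _ : ℕ) : ℤ) = ((Nat.card _ : ℕ) : ℤ)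
  rw [le_antisymm (key s' s d) (key s s' d)]

end Slide

/-! ### Comparison of the Littlewood–Richardson numbers -/

section Main

theorem mem_skew (lam mu : YoungDiagram) (i j : ℕ) :
    (i, j) ∈ lam.cells \ mu.cells ↔ mu.rowLen i ≤ j ∧ j < lam.rowLen i := by
  rw [mem_sdiff, YoungDiagram.mem_cells, YoungDiagram.mem_cells, YoungDiagram.mem_iff_lt_rowLen,
    YoungDiagram.mem_iff_lt_rowLen]
  omega

theorem isSkew_skew {lam mu : YoungDiagram} (h : mu ≤ lam) :
    IsSkew (lam.cells \ mu.cells) mu.rowLen lam.rowLen where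
  anti_a i j hij := mu.rowLen_anti i j hij
  anti_b i j hij := lam.rowLen_anti i j hij
  le i := by
    by_contra hlt
    push Not at hlt
    have h1 := h ((mu.mem_iff_lt_rowLen (i := i)).2 hlt)
    rw [YoungDiagram.mem_iff_lt_rowLen] at h1
    omega
  mem := mem_skew lam mu

theorem SDiag_eq_below (lam mu : YoungDiagram) (E : Diagram) (k : ℕ) :
    SDiag lam mu E k = below E (lam.cells \ mu.cells) (tlCol (lam.cells \ mu.cells) + k) := by
  simp only [SDiag, SDiagG, below, add_assoc]

/-- The shift in `SDiag` may be chosen so that the resulting diagram is a skew diagram. -/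
theorem exists_shift (lam mu : YoungDiagram) (hlm : mu ≤ lam) (k l : ℕ)
    (hk : lam.rowLen 0 - mu.rowLen 0 - k ≤ l) : ∃ s, mu.rowLen 0 ≤ s ∧ lam.rowLen 0 ≤ s + l ∧
      ∀ E, schurOf (SDiag lam mu E k) = schurOf (below E (lam.cells \ mu.cells) s) := by
  rcases ((isSkew_skew hlm).le 0).lt_or_eq with h | h
  · have h0 : (0, mu.rowLen 0) ∈ lam.cells \ mu.cells := (mem_skew _ _ _ _).2 ⟨le_rfl, h⟩
    have htop : topRow (lam.cells \ mu.cells) = 0 := by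
      refine Nat.eq_zero_of_le_zero (Nat.sInf_le ?_)
      exact ⟨_, h0⟩
    have htl : tlCol (lam.cells \ mu.cells) = mu.rowLen 0 := by
      rw [tlCol, htop]
      refine le_antisymm (Nat.sInf_le h0) ?_
      exact ((mem_skew _ _ _ _).1 (Nat.sInf_mem (s := {j | (0, j) ∈ lam.cells \ mu.cells})
        ⟨_, h0⟩)).1
    refine ⟨mu.rowLen 0 + k, by omega, by omega, fun E => ?_⟩
    rw [SDiag_eq_below, htl]
  · refine ⟨mu.rowLen 0, le_rfl, by omega, fun E => ?_⟩
    rw [SDiag_eq_below]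
    refine schurOf_below_slide (fun j hj => ?_) E _ _
    have := (mem_skew _ _ _ _).1 hj
    omega

end Main

/-- if `D = ρ/κ` is a sum of fat staircases then
`Σ_ν c^ρ_{κν} s_{S(λ,μ,α(ν)^◁;k)} − s_{S(λ,μ,D;k)}` is Schur-positive. -/
theorem sumOfFat_augment_schurPositive (ρ κ : YoungDiagram) (hsub : κ ≤ ρ)
    (hfat : IsSumOfFatStaircases (ρ.cells \ κ.cells))
    (lam mu : YoungDiagram) (hlm : mu ≤ lam) (k : ℕ)
    (hk : lam.rowLen 0 - mu.rowLen 0 - k ≤ lastRowLen (ρ.cells \ κ.cells)) :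
    SchurPositive
      ((∑ᶠ α : List ℕ,
          if ∀ a ∈ α, 0 < a then
            (lrCoeff ρ κ (rowContent (fatStaircase α))) •
              schurOf (SDiag lam mu (rotD (fatStaircase α)) k)
          else 0)
        - schurOf (SDiag lam mu (ρ.cells \ κ.cells) k)) := by
  classical
  obtain ⟨s, hs1, hs2, hs⟩ := exists_shift lam mu hlm k _ hk
  simp only [hs]
  unfold lrCoeff
  have hD := isSkew_skew hsub
  have hF := isSkew_skew hlm
  set D := ρ.cells \ κ.cells
  set F := lam.cells \ mu.cells
  let ν : List ℕ → ℕ →₀ ℕ := fun α => rowContent (fatStaircase α)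
  have hνv : ∀ α v, ν α v = stairRow α v := rowContent_fatStaircase
  have hanti : ∀ α, (∀ a ∈ α, 0 < a) → Antitone (ν α) := fun α hα =>
    antitone_nat_of_succ_le fun v => by
      rw [hνv, hνv]; exact ((stairRow_props α hα).2 v).1
  have hstep : ∀ α, (∀ a ∈ α, 0 < a) → ∀ v, ν α v ≤ ν α (v + 1) + 1 := fun α hα v => by
    rw [hνv, hνv]; exact ((stairRow_props α hα).2 v).2
  have hmem : ∀ α i j, (i, j) ∈ fatStaircase α ↔ j < ν α i := fun α i j => by
    rw [hνv, mem_fatStaircase]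
  have hinj : ∀ α β, (∀ a ∈ α, 0 < a) → (∀ a ∈ β, 0 < a) → ν α = ν β → α = β := by
    intro α β hα hβ h
    refine stairRow_injective α β hα hβ (funext fun v => ?_)
    rw [← hνv, ← hνv, h]
  let V := (finite_lrCount hD).toFinset
  have hV : ∀ d, d ∈ V ↔ lrCount D d ≠ 0 := fun d => Set.Finite.mem_toFinset _
  have hPfin : {α : List ℕ | (∀ a ∈ α, 0 < a) ∧ ν α ∈ V}.Finite :=
    Set.Finite.of_injOn (f := ν) (t := (V : Set (ℕ →₀ ℕ))) (fun α h => h.2)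
      (fun α h β h' e => hinj α β h.1 h'.1 e) V.finite_toSet
  let P := hPfin.toFinset
  have hP : ∀ α, α ∈ P ↔ (∀ a ∈ α, 0 < a) ∧ lrCount D (ν α) ≠ 0 := fun α => by
    rw [← hV]; exact Set.Finite.mem_toFinset _
  -- the infinite sum is a finite one
  rw [finsum_eq_sum_of_support_subset (s := P) _ (by
    intro α hα
    rw [Function.mem_support] at hα
    rw [mem_coe, hP]
    split_ifs at hα with h
    · exact ⟨h, fun h0 => hα (by rw [h0, zero_smul])⟩
    · exact absurd rfl hα)]
  have hskewD : ∃ a b, IsSkew (below D F s) a b := isSkew_below hD hF hs1 hs2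
  have hskewP : ∀ α ∈ P, ∃ a b, IsSkew (below (rotD (fatStaircase α)) F s) a b := by
    intro α hα
    obtain ⟨h1, h2⟩ := (hP α).1 hα
    refine isSkew_below (isSkew_rotD (hanti α h1) (hmem α)) hF hs1 ?_
    rw [lastRowLen_rotD (hanti α h1) (hmem α)]
    obtain ⟨T, hT, hT'⟩ := exists_of_lrCount h2
    have := hD.lastRowLen_le hT
    rw [hT'] at this
    omega
  have hfinD : {d | lrCount (below D F s) d ≠ 0}.Finite := by
    obtain ⟨a, b, h⟩ := hskewD
    exact finite_lrCount h
  have hfinP : {d | ∃ α ∈ P, lrCount (below (rotD (fatStaircase α)) F s) d ≠ 0}.Finite := by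
    have : {d | ∃ α ∈ P, lrCount (below (rotD (fatStaircase α)) F s) d ≠ 0} =
        ⋃ α ∈ P, {d | lrCount (below (rotD (fatStaircase α)) F s) d ≠ 0} := by
      ext d; simp
    rw [this]
    refine Set.Finite.biUnion P.finite_toSet fun α hα => ?_
    obtain ⟨a, b, h⟩ := hskewP α hα
    exact finite_lrCount h
  let S := hfinD.toFinset ∪ hfinP.toFinset
  have hS : ∀ d, d ∈ S ↔ lrCount (below D F s) d ≠ 0 ∨
      ∃ α ∈ P, lrCount (below (rotD (fatStaircase α)) F s) d ≠ 0 := by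
    intro d
    simp only [S, mem_union, Set.Finite.mem_toFinset]
    rfl
  have hSanti : ∀ d ∈ S, Antitone d := by
    intro d hd
    rcases (hS d).1 hd with h | ⟨α, hα, h⟩
    · obtain ⟨a, b, h'⟩ := hskewD
      exact antitone_of_lrCount h' h
    · obtain ⟨a, b, h'⟩ := hskewP α hα
      exact antitone_of_lrCount h' h
  have hle : ∀ d, lrCount (below D F s) d ≤
      ∑ α ∈ P, lrCount D (ν α) * lrCount (below (rotD (fatStaircase α)) F s) d := by
    intro d
    refine (lrCount_below_le hD hF hs2 V (fun d h => (hV d).2 h) d).trans ?_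
    have hsubV : V ⊆ P.image ν := by
      intro d hd
      obtain ⟨α, hα, rfl⟩ := hfat d ((hV d).1 hd)
      exact mem_image.2 ⟨α, (hP α).2 ⟨hα, (hV _).1 hd⟩, rfl⟩
    refine (sum_le_sum_of_subset hsubV).trans ?_
    rw [sum_image fun α h β h' e => hinj α β ((hP α).1 h).1 ((hP β).1 h').1 e]
    refine sum_le_sum fun α hα => Nat.mul_le_mul_left _ ?_
    have h1 := ((hP α).1 hα).1
    exact card_lower_le (hanti α h1) (hmem α) (hstep α h1) hF hs1 d
  refine ⟨S, fun d => ∑ α ∈ P, lrCount D (ν α) * lrCount (below (rotD (fatStaircase α)) F s) d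
    - lrCount (below D F s) d, fun d hd i => hSanti d hd (Nat.le_succ i), ?_⟩
  have e1 : schurOf (below D F s) =
      ∑ d ∈ S, (lrCount (below D F s) d : ℤ) • schurOf (diagramOfF d) := by
    obtain ⟨a, b, h⟩ := hskewD
    exact lr_rule h S hSanti fun d hd => (hS d).2 (Or.inl hd)
  have e2 : ∀ α ∈ P, (if ∀ a ∈ α, 0 < a then lrCount D (rowContent (fatStaircase α)) •
      schurOf (below (rotD (fatStaircase α)) F s) else 0) =
      ∑ d ∈ S, ((lrCount D (ν α) * lrCount (below (rotD (fatStaircase α)) F s) d : ℕ) : ℤ) •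
        schurOf (diagramOfF d) := by
    intro α hα
    obtain ⟨a, b, h⟩ := hskewP α hα
    rw [if_pos ((hP α).1 hα).1,
      lr_rule h S hSanti fun d hd => (hS d).2 (Or.inr ⟨α, hα, hd⟩), smul_sum]
    refine sum_congr rfl fun d _ => ?_
    rw [Nat.cast_mul, mul_smul, natCast_zsmul _ (lrCount D (ν α))]
  rw [sum_congr rfl e2, sum_comm, e1, ← sum_sub_distrib]
  refine sum_congr rfl fun d _ => ?_
  rw [Nat.cast_sub (hle d), sub_smul, Nat.cast_sum, sum_smul]
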